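/- arXiv:2102.07758 — 11 statements merged into one kernel-verified Lean document; each statement's English description precedes it below -/
import Mathlib

section
/- Let Θ ⊆ ℝ^d be a closed convex set, h : Θ → ℝ a convex differentiable function, A ∈ ℝ^{m×d}, b ∈ ℝ^m, and assume {θ ∈ Θ : Aθ = b} is nonempty. Define φ(ν) = inf_{θ∈Θ} (h(θ) + ⟨ν, Aθ − b⟩) for ν ∈ ℝ^m. Suppose ν* ∈ ℝ^m maximizes φ over all of ℝ^m and ‖ν*‖₂ < R for some R > 0. If (θ̃, ν̃) ∈ Θ × {ν : ‖ν‖₂ ≤ R} is a saddle point of L(θ,ν) = h(θ) + ⟨ν, Aθ − b⟩ on Θ × {ν : ‖ν‖₂ ≤ R}, i.e. L(θ̃, ν) ≤ L(θ̃, ν̃) ≤ L(θ, ν̃) for all θ ∈ Θ and all ν with ‖ν‖₂ ≤ R, then A θ̃ = b and h(θ̃) ≤ h(θ) for every θ ∈ Θ with Aθ = b. -/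
/-!
Write `r = A θt - b`. The value of the saddle point is `φ νt`, so dual optimality of `νstar` gives
`L(θt, νt) = φ νt ≤ φ νstar ≤ L(θt, νstar)`, i.e. `⟪νt, r⟫ ≤ ⟪νstar, r⟫`. Maximality of `νt` over
the ball, tested at `(R / ‖r‖) • r`, gives `R * ‖r‖ ≤ ⟪νt, r⟫`. By Cauchy–Schwarz
`R * ‖r‖ ≤ ‖νstar‖ * ‖r‖`, and `‖νstar‖ < R` forces `r = 0`. Once `A θt = b`, the second saddle
inequality restricted to feasible points is exactly the optimality of `θt`.
-/

open RealInnerProductSpace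

theorem stmt_0 (d m : ℕ)
    (Θ : Set (EuclideanSpace ℝ (Fin d)))
    (hΘclosed : IsClosed Θ) (hΘconv : Convex ℝ Θ)
    (h : EuclideanSpace ℝ (Fin d) → ℝ)
    (hhconv : ConvexOn ℝ Θ h) (hhdiff : DifferentiableOn ℝ h Θ)
    (A : EuclideanSpace ℝ (Fin d) →ₗ[ℝ] EuclideanSpace ℝ (Fin m))
    (b : EuclideanSpace ℝ (Fin m))
    (hfeas : ∃ θ ∈ Θ, A θ = b)
    (φ : EuclideanSpace ℝ (Fin m) → EReal)
    (hφ : ∀ ν, φ ν = ⨅ θ : Θ, ((h θ.1 + ⟪ν, A θ.1 - b⟫ : ℝ) : EReal))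
    (νstar : EuclideanSpace ℝ (Fin m))
    (hmax : ∀ ν, φ ν ≤ φ νstar)
    (R : ℝ) (hR : 0 < R) (hνstar : ‖νstar‖ < R)
    (θt : EuclideanSpace ℝ (Fin d)) (νt : EuclideanSpace ℝ (Fin m))
    (hθt : θt ∈ Θ) (hνt : ‖νt‖ ≤ R)
    (hsaddle1 : ∀ ν : EuclideanSpace ℝ (Fin m), ‖ν‖ ≤ R →
      h θt + ⟪ν, A θt - b⟫ ≤ h θt + ⟪νt, A θt - b⟫)
    (hsaddle2 : ∀ θ ∈ Θ, h θt + ⟪νt, A θt - b⟫ ≤ h θ + ⟪νt, A θ - b⟫) :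
    A θt = b ∧ ∀ θ ∈ Θ, A θ = b → h θt ≤ h θ := by
  have hle : h θt + ⟪νt, A θt - b⟫ ≤ h θt + ⟪νstar, A θt - b⟫ := by
    rw [← EReal.coe_le_coe_iff]
    calc ((h θt + ⟪νt, A θt - b⟫ : ℝ) : EReal) ≤ φ νt := by
          rw [hφ]
          exact le_iInf fun θ => EReal.coe_le_coe_iff.2 (hsaddle2 θ.1 θ.2)
      _ ≤ φ νstar := hmax νt
      _ ≤ _ := by
          rw [hφ]
          exact iInf_le (fun θ : Θ => ((h θ.1 + ⟪νstar, A θ.1 - b⟫ : ℝ) : EReal)) ⟨θt, hθt⟩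
  have hfeasible : A θt = b := by
    by_contra hne
    have hr : 0 < ‖A θt - b‖ := norm_pos_iff.2 (sub_ne_zero.2 hne)
    have hball := hsaddle1 ((R / ‖A θt - b‖) • (A θt - b)) (by
      rw [norm_smul, Real.norm_of_nonneg (by positivity), div_mul_cancel₀ _ hr.ne'])
    have hinner : ⟪(R / ‖A θt - b‖) • (A θt - b), A θt - b⟫ = R * ‖A θt - b‖ := by
      rw [real_inner_smul_left, real_inner_self_eq_norm_sq]
      field_simp
    have hcs := real_inner_le_norm νstar (A θt - b)
    have hlt := mul_lt_mul_of_pos_right hνstar hr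
    linarith
  refine ⟨hfeasible, fun θ hθ hAθ => ?_⟩
  simpa [hfeasible, hAθ] using hsaddle2 θ hθ
end

section
/- Let L(x,p,s,y,q,z) = F(x,p,y,q) + ⟨z, 𝐖_x x⟩ + ⟨s, 𝐖_y y⟩. If (x*, p*, y*, q*, s*, z*) is a saddle point of L on (X × P × ℝ^{m d_y}) × (Y × Q × ℝ^{m d_x}) — i.e. L(x*,p*,s*,y,q,z) ≤ L(x*,p*,s*,y*,q*,z*) ≤ L(x,p,s,y*,q*,z*) for all (x,p,s) ∈ X × P × ℝ^{m d_y} and all (y,q,z) ∈ Y × Q × ℝ^{m d_x} — then x_1* = … = x_m* =: x̄* and y_1* = … = y_m* =: ȳ*, and (x̄*, p*, ȳ*, q*) is a saddle point of the original problem: (1/m)Σ_i f_i(x̄*, p_i*, y, q_i) ≤ (1/m)Σ_i f_i(x̄*, p_i*, ȳ*, q_i*) ≤ (1/m)Σ_i f_i(x, p_i, ȳ*, q_i*) for all x ∈ X̄, p ∈ P, y ∈ Ȳ, q ∈ Q. -/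
/-!
The multipliers `z` and `s` range over whole spaces and enter the Lagrangian linearly, so the
saddle inequalities in `z` and `s` alone force the coefficients `𝐖_x x*` and `𝐖_y y*` to vanish
(`eq_zero_of_sum_inner_le`). By the kernel condition this is consensus of `x*` and of `y*`
(`blockMulVec_eq_zero_iff`). Restricting the saddle inequalities to consensus vectors `y` and `x`
makes all penalty terms vanish, and what remains is the saddle property of `∑ i, f i`.
-/

open RealInnerProductSpace

noncomputable def stmt2Lagr {m dx dp dy dq : ℕ}
    (f : Fin m → EuclideanSpace ℝ (Fin dx) → EuclideanSpace ℝ (Fin dp) →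
         EuclideanSpace ℝ (Fin dy) → EuclideanSpace ℝ (Fin dq) → ℝ)
    (Wx Wy : Matrix (Fin m) (Fin m) ℝ)
    (x : Fin m → EuclideanSpace ℝ (Fin dx)) (p : Fin m → EuclideanSpace ℝ (Fin dp))
    (s : Fin m → EuclideanSpace ℝ (Fin dy))
    (y : Fin m → EuclideanSpace ℝ (Fin dy)) (q : Fin m → EuclideanSpace ℝ (Fin dq))
    (z : Fin m → EuclideanSpace ℝ (Fin dx)) : ℝ :=
  (∑ i, f i (x i) (p i) (y i) (q i)) + (∑ i, ⟪z i, ∑ j, Wx i j • x j⟫) +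
    (∑ i, ⟪s i, ∑ j, Wy i j • y j⟫)

/-- The blockwise action `W ⊗ I` vanishes exactly on consensus vectors, because it acts on each
coordinate separately as `W`. -/
lemma blockMulVec_eq_zero_iff {m d : ℕ} (W : Matrix (Fin m) (Fin m) ℝ)
    (hW : ∀ v : Fin m → ℝ, W.mulVec v = 0 ↔ ∀ i j, v i = v j)
    (x : Fin m → EuclideanSpace ℝ (Fin d)) :
    (∀ i, ∑ j, W i j • x j = 0) ↔ ∀ i j, x i = x j := by
  have key : ∀ i k, (∑ j, W i j • x j) k = W.mulVec (fun j => x j k) i := by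
    intro i k
    simp [Matrix.mulVec, dotProduct]
  constructor
  · intro h i j
    ext k
    refine (hW fun j => x j k).1 ?_ i j
    funext l
    rw [← key, h l]
    rfl
  · intro h i
    ext k
    rw [key, (hW fun j => x j k).2 fun i j => by rw [h i j]]
    rfl

/-- A linear functional `⟪·, w⟫` maximized at some point `z₀` of the whole space is zero: test it at
`z₀ + w`. -/
lemma eq_zero_of_sum_inner_le {m d : ℕ} (w z₀ : Fin m → EuclideanSpace ℝ (Fin d))
    (h : ∀ z : Fin m → EuclideanSpace ℝ (Fin d), ∑ i, ⟪z i, w i⟫ ≤ ∑ i, ⟪z₀ i, w i⟫) :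
    ∀ i, w i = 0 := by
  have h1 := h fun i => z₀ i + w i
  simp only [inner_add_left, Finset.sum_add_distrib] at h1
  have h0 : ∑ i, ⟪w i, w i⟫ = 0 :=
    le_antisymm (by linarith) (Finset.sum_nonneg fun i _ => real_inner_self_nonneg)
  intro i
  rw [Finset.sum_eq_zero_iff_of_nonneg fun i _ => real_inner_self_nonneg] at h0
  exact inner_self_eq_zero.1 (h0 i (Finset.mem_univ i))

theorem stmt_2
    (m dx dp dy dq : ℕ) (hm : 0 < m)
    (Xb : Set (EuclideanSpace ℝ (Fin dx))) (Yb : Set (EuclideanSpace ℝ (Fin dy)))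
    (Pc : Fin m → Set (EuclideanSpace ℝ (Fin dp)))
    (Qc : Fin m → Set (EuclideanSpace ℝ (Fin dq)))
    (hXb : Xb.Nonempty ∧ Convex ℝ Xb ∧ IsCompact Xb)
    (hYb : Yb.Nonempty ∧ Convex ℝ Yb ∧ IsCompact Yb)
    (hPc : ∀ i, (Pc i).Nonempty ∧ Convex ℝ (Pc i) ∧ IsCompact (Pc i))
    (hQc : ∀ i, (Qc i).Nonempty ∧ Convex ℝ (Qc i) ∧ IsCompact (Qc i))
    (f : Fin m → EuclideanSpace ℝ (Fin dx) → EuclideanSpace ℝ (Fin dp) →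
         EuclideanSpace ℝ (Fin dy) → EuclideanSpace ℝ (Fin dq) → ℝ)
    (hfdiff : ∀ i, Differentiable ℝ
      (fun t : (EuclideanSpace ℝ (Fin dx) × EuclideanSpace ℝ (Fin dp)) ×
          (EuclideanSpace ℝ (Fin dy) × EuclideanSpace ℝ (Fin dq)) =>
        f i t.1.1 t.1.2 t.2.1 t.2.2))
    (hfconv : ∀ i, ∀ y ∈ Yb, ∀ q ∈ Qc i,
      ConvexOn ℝ (Xb ×ˢ Pc i)
        (fun t : EuclideanSpace ℝ (Fin dx) × EuclideanSpace ℝ (Fin dp) => f i t.1 t.2 y q))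
    (hfconc : ∀ i, ∀ x ∈ Xb, ∀ p ∈ Pc i,
      ConcaveOn ℝ (Yb ×ˢ Qc i)
        (fun t : EuclideanSpace ℝ (Fin dy) × EuclideanSpace ℝ (Fin dq) => f i x p t.1 t.2))
    (Wx Wy : Matrix (Fin m) (Fin m) ℝ)
    (hWxpsd : Wx.PosSemidef) (hWypsd : Wy.PosSemidef)
    (hWxker : ∀ v : Fin m → ℝ, Wx.mulVec v = 0 ↔ ∀ i j, v i = v j)
    (hWyker : ∀ v : Fin m → ℝ, Wy.mulVec v = 0 ↔ ∀ i j, v i = v j)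
    (Mx My : ℝ) (hMx : 0 < Mx) (hMy : 0 < My)
    (hgradx : ∀ i, ∀ x ∈ Xb, ∀ p ∈ Pc i, ∀ y ∈ Yb, ∀ q ∈ Qc i,
      ‖gradient (fun x' => f i x' p y q) x‖ ≤ Mx)
    (hgrady : ∀ i, ∀ x ∈ Xb, ∀ p ∈ Pc i, ∀ y ∈ Yb, ∀ q ∈ Qc i,
      ‖gradient (fun y' => f i x p y' q) y‖ ≤ My)
    (xs : Fin m → EuclideanSpace ℝ (Fin dx)) (ps : Fin m → EuclideanSpace ℝ (Fin dp))
    (ys : Fin m → EuclideanSpace ℝ (Fin dy)) (qs : Fin m → EuclideanSpace ℝ (Fin dq))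
    (ss : Fin m → EuclideanSpace ℝ (Fin dy)) (zs : Fin m → EuclideanSpace ℝ (Fin dx))
    (hxs : ∀ i, xs i ∈ Xb) (hps : ∀ i, ps i ∈ Pc i)
    (hys : ∀ i, ys i ∈ Yb) (hqs : ∀ i, qs i ∈ Qc i)
    (hsaddle1 : ∀ (y : Fin m → EuclideanSpace ℝ (Fin dy))
        (q : Fin m → EuclideanSpace ℝ (Fin dq)) (z : Fin m → EuclideanSpace ℝ (Fin dx)),
      (∀ i, y i ∈ Yb) → (∀ i, q i ∈ Qc i) →
        stmt2Lagr f Wx Wy xs ps ss y q z ≤ stmt2Lagr f Wx Wy xs ps ss ys qs zs)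
    (hsaddle2 : ∀ (x : Fin m → EuclideanSpace ℝ (Fin dx))
        (p : Fin m → EuclideanSpace ℝ (Fin dp)) (s : Fin m → EuclideanSpace ℝ (Fin dy)),
      (∀ i, x i ∈ Xb) → (∀ i, p i ∈ Pc i) →
        stmt2Lagr f Wx Wy xs ps ss ys qs zs ≤ stmt2Lagr f Wx Wy x p s ys qs zs) :
    (∀ i j, xs i = xs j) ∧ (∀ i j, ys i = ys j) ∧
      ∀ x ∈ Xb, ∀ p : Fin m → EuclideanSpace ℝ (Fin dp), (∀ i, p i ∈ Pc i) →
      ∀ y ∈ Yb, ∀ q : Fin m → EuclideanSpace ℝ (Fin dq), (∀ i, q i ∈ Qc i) →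
        (1 / (m : ℝ)) * ∑ i, f i (xs ⟨0, hm⟩) (ps i) y (q i) ≤
          (1 / (m : ℝ)) * ∑ i, f i (xs ⟨0, hm⟩) (ps i) (ys ⟨0, hm⟩) (qs i) ∧
        (1 / (m : ℝ)) * ∑ i, f i (xs ⟨0, hm⟩) (ps i) (ys ⟨0, hm⟩) (qs i) ≤
          (1 / (m : ℝ)) * ∑ i, f i x (p i) (ys ⟨0, hm⟩) (qs i) := by
  have hWx : ∀ i, ∑ j, Wx i j • xs j = 0 := by
    refine eq_zero_of_sum_inner_le _ zs fun z => ?_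
    have h := hsaddle1 ys qs z hys hqs
    unfold stmt2Lagr at h
    linarith
  have hWy : ∀ i, ∑ j, Wy i j • ys j = 0 := by
    -- `L` is minimized over `s`, so the upper bound is obtained at `-s`.
    refine eq_zero_of_sum_inner_le _ (fun i => -ss i) fun s => ?_
    have h := hsaddle2 xs ps (fun i => -s i) hxs hps
    unfold stmt2Lagr at h
    simp only [inner_neg_left, Finset.sum_neg_distrib] at h ⊢
    linarith
  have hx := (blockMulVec_eq_zero_iff Wx hWxker xs).1 hWx
  have hy := (blockMulVec_eq_zero_iff Wy hWyker ys).1 hWy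
  refine ⟨hx, hy, fun x hxX p hp y hyY q hq => ?_⟩
  have hWx' : ∀ i, ∑ j, Wx i j • x = 0 :=
    (blockMulVec_eq_zero_iff Wx hWxker fun _ => x).2 fun _ _ => rfl
  have hWy' : ∀ i, ∑ j, Wy i j • y = 0 :=
    (blockMulVec_eq_zero_iff Wy hWyker fun _ => y).2 fun _ _ => rfl
  have h1 := hsaddle1 (fun _ => y) q zs (fun _ => hyY) hq
  have h2 := hsaddle2 (fun _ => x) p ss (fun _ => hxX) hp
  simp only [stmt2Lagr, hWx, hWy, hWx', hWy', inner_zero_right, Finset.sum_const_zero,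
    add_zero] at h1 h2
  simp only [fun i => hx i ⟨0, hm⟩, fun i => hy i ⟨0, hm⟩] at h1 h2
  exact ⟨mul_le_mul_of_nonneg_left h1 (by positivity),
    mul_le_mul_of_nonneg_left h2 (by positivity)⟩
end

section
/- Set R_Z² = 2 m M_x² / (λ_min⁺(W_x))² and R_S² = 2 m M_y² / (λ_min⁺(W_y))². Then there exists a saddle point (x*, p*, y*, q*, s*, z*) of L(x,p,s,y,q,z) = F(x,p,y,q) + ⟨z, 𝐖_x x⟩ + ⟨s, 𝐖_y y⟩ on (X × P × ℝ^{m d_y}) × (Y × Q × ℝ^{m d_x}) such that ‖s*‖₂ ≤ R_S and ‖z*‖₂ ≤ R_Z. -/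
/-!
The two multipliers are first confined to Euclidean balls of radii `RS` and `RZ`. All sets are then
convex and compact, the Lagrangian is continuous and convex-concave, and the minimax theorem of Sion
and von Neumann gives a saddle point `(x, p, s)`, `(y, q, z)` of the confined problem, so the norm
bounds hold by construction. It remains to see that it is a saddle point without the confinement.

This follows once `Wx x = 0` and `Wy y = 0`, since then the Lagrangian no longer depends on `z`
(resp. `s`) at the point in question. To obtain `Wx x = 0`, let `c` be the mean of the `x i`. As `z`
is optimal in its ball, `⟪z, Wx x⟫ ≥ RZ ‖Wx x‖`, and comparing `x` with the constant family `c` gives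
`RZ ‖Wx x‖ ≤ ∑ Mx ‖x i - c‖ ≤ √m Mx ‖x - c‖`. By the spectral theorem `‖Wx x‖ ≥ lx ‖x - c‖`, and
`RZ lx = √2 √m Mx` exceeds `√m Mx`, so `x = c`. The argument for `y` is the same with signs reversed.
-/

open RealInnerProductSpace

noncomputable def stmt3Lagr {m dx dp dy dq : ℕ}
    (f : Fin m → EuclideanSpace ℝ (Fin dx) → EuclideanSpace ℝ (Fin dp) →
         EuclideanSpace ℝ (Fin dy) → EuclideanSpace ℝ (Fin dq) → ℝ)
    (Wx Wy : Matrix (Fin m) (Fin m) ℝ)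
    (x : Fin m → EuclideanSpace ℝ (Fin dx)) (p : Fin m → EuclideanSpace ℝ (Fin dp))
    (s : Fin m → EuclideanSpace ℝ (Fin dy))
    (y : Fin m → EuclideanSpace ℝ (Fin dy)) (q : Fin m → EuclideanSpace ℝ (Fin dq))
    (z : Fin m → EuclideanSpace ℝ (Fin dx)) : ℝ :=
  (∑ i, f i (x i) (p i) (y i) (q i)) + (∑ i, ⟪z i, ∑ j, Wx i j • x j⟫) +
    (∑ i, ⟪s i, ∑ j, Wy i j • y j⟫)

/-- On mean-zero vectors, which are exactly those orthogonal to the kernel, `W` expands the Euclidean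
norm by at least its smallest positive eigenvalue. -/
lemma spectral_gap {m : ℕ} {W : Matrix (Fin m) (Fin m) ℝ} (hW : W.PosSemidef)
    (hker : ∀ v : Fin m → ℝ, W.mulVec v = 0 ↔ ∀ i j, v i = v j) {l : ℝ}
    (hl : IsLeast {μ : ℝ | 0 < μ ∧ ∃ v : Fin m → ℝ, v ≠ 0 ∧ W.mulVec v = μ • v} l)
    (v : Fin m → ℝ) (hv : ∑ i, v i = 0) :
    l ^ 2 * ∑ i, v i ^ 2 ≤ ∑ i, (W.mulVec v i) ^ 2 := by
  set b := hW.isHermitian.eigenvectorBasis with hb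
  set μ := hW.isHermitian.eigenvalues with hμ
  have hparseval (w : Fin m → ℝ) : ∑ i, w i ^ 2 = ∑ k, ((b k).ofLp ⬝ᵥ w) ^ 2 := by
    have := b.sum_sq_norm_inner_right (WithLp.toLp 2 w)
    rw [EuclideanSpace.norm_sq_eq] at this
    simp only [Real.norm_eq_abs, sq_abs, EuclideanSpace.inner_eq_star_dotProduct] at this
    rw [← this]
    simp [dotProduct_comm]
  have hcoef (k : Fin m) : (b k).ofLp ⬝ᵥ W.mulVec v = μ k * ((b k).ofLp ⬝ᵥ v) := by
    have hsymm : W.transpose = W := by simpa using hW.isHermitian.eq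
    rw [Matrix.dotProduct_mulVec, ← Matrix.mulVec_transpose, hsymm,
      hW.isHermitian.mulVec_eigenvectorBasis, smul_dotProduct, smul_eq_mul]
  rw [hparseval v, hparseval (W.mulVec v), Finset.mul_sum]
  refine Finset.sum_le_sum fun k _ => ?_
  rw [hcoef, mul_pow]
  have heig := hW.isHermitian.mulVec_eigenvectorBasis k
  rcases (hW.eigenvalues_nonneg k).eq_or_lt with h0 | hpos
  · -- an eigenvector for `0` is constant, hence orthogonal to the mean-zero vector `v`
    have hconst := (hker (b k).ofLp).1 (by rw [heig, ← h0, zero_smul])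
    have : (b k).ofLp ⬝ᵥ v = 0 := by
      rw [dotProduct, Finset.sum_congr rfl fun i _ => by rw [hconst i k], ← Finset.mul_sum, hv,
        mul_zero]
    simp [this]
  · have hle : l ≤ μ k := hl.2 ⟨hpos, (b k).ofLp, by
      simpa using b.orthonormal.ne_zero k, heig⟩
    have := hl.1.1
    gcongr

/-- The distance of a family of vectors to its mean is controlled by `W`, coordinate by coordinate. -/
lemma spectral_gap_vec {m d : ℕ} (hm : 0 < m) {W : Matrix (Fin m) (Fin m) ℝ} (hW : W.PosSemidef)
    (hker : ∀ v : Fin m → ℝ, W.mulVec v = 0 ↔ ∀ i j, v i = v j) {l : ℝ}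
    (hl : IsLeast {μ : ℝ | 0 < μ ∧ ∃ v : Fin m → ℝ, v ≠ 0 ∧ W.mulVec v = μ • v} l)
    (x : Fin m → EuclideanSpace ℝ (Fin d)) :
    l ^ 2 * ∑ i, ‖x i - (m : ℝ)⁻¹ • ∑ j, x j‖ ^ 2 ≤ ∑ i, ‖∑ j, W i j • x j‖ ^ 2 := by
  simp only [EuclideanSpace.norm_sq_eq, Real.norm_eq_abs, sq_abs]
  rw [Finset.sum_comm, Finset.mul_sum]
  conv_rhs => rw [Finset.sum_comm]
  refine Finset.sum_le_sum fun k _ => ?_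
  have hm' : (m : ℝ) ≠ 0 := by positivity
  have hcoord : W.mulVec (fun i => (x i - (m : ℝ)⁻¹ • ∑ j, x j) k)
      = W.mulVec (fun i => x i k) := by
    have h0 : W.mulVec (fun _ => ((m : ℝ)⁻¹ • ∑ j, x j) k) = 0 := (hker _).2 fun _ _ => rfl
    rw [← sub_zero (W.mulVec fun i => x i k), ← h0, ← Matrix.mulVec_sub]
    rfl
  have := spectral_gap hW hker hl (fun i => (x i - (m : ℝ)⁻¹ • ∑ j, x j) k)
    (by simp [Finset.sum_sub_distrib, hm'])
  rw [hcoord] at this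
  simpa [Matrix.mulVec, dotProduct] using this

lemma weighted_sum_const {m d : ℕ} {W : Matrix (Fin m) (Fin m) ℝ}
    (hker : ∀ v : Fin m → ℝ, W.mulVec v = 0 ↔ ∀ i j, v i = v j)
    (c : EuclideanSpace ℝ (Fin d)) (i : Fin m) : ∑ j, W i j • c = 0 := by
  have := congrFun ((hker fun _ => 1).2 fun _ _ => rfl) i
  rw [← Finset.sum_smul]
  simp only [Matrix.mulVec, dotProduct, mul_one, Pi.zero_apply] at this
  rw [this, zero_smul]

/-- The exact penalty argument. Let `x` minimize `∑ g i (x i) + ⟪z, W x⟫` over `X ^ m`, where `z`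
maximizes `⟪·, W x⟫` over the ball of radius `R`. The penalty `⟪z, W x⟫` is then at least `R ‖W x‖`,
which grows faster than `∑ g i (x i)` can decrease when `x` moves away from its mean, so `W x = 0`. -/
lemma consensus_of_saddle {m d : ℕ} (hm : 0 < m) {W : Matrix (Fin m) (Fin m) ℝ}
    (hW : W.PosSemidef)
    (hker : ∀ v : Fin m → ℝ, W.mulVec v = 0 ↔ ∀ i j, v i = v j) {l : ℝ}
    (hl : IsLeast {μ : ℝ | 0 < μ ∧ ∃ v : Fin m → ℝ, v ≠ 0 ∧ W.mulVec v = μ • v} l)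
    {X : Set (EuclideanSpace ℝ (Fin d))} (hX : Convex ℝ X)
    {g : Fin m → EuclideanSpace ℝ (Fin d) → ℝ} (hg : ∀ i, Differentiable ℝ (g i))
    {M R : ℝ} (hM : 0 < M) (hR : 0 ≤ R) (hR2 : R ^ 2 = 2 * m * M ^ 2 / l ^ 2)
    (hgrad : ∀ i, ∀ x ∈ X, ‖gradient (g i) x‖ ≤ M)
    {x z : Fin m → EuclideanSpace ℝ (Fin d)} (hx : ∀ i, x i ∈ X)
    (hz : ∀ z' : Fin m → EuclideanSpace ℝ (Fin d), ∑ i, ‖z' i‖ ^ 2 ≤ R ^ 2 →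
      ∑ i, ⟪z' i, ∑ j, W i j • x j⟫ ≤ ∑ i, ⟪z i, ∑ j, W i j • x j⟫)
    (hmin : ∀ x' : Fin m → EuclideanSpace ℝ (Fin d), (∀ i, x' i ∈ X) →
      ∑ i, g i (x i) + ∑ i, ⟪z i, ∑ j, W i j • x j⟫ ≤
        ∑ i, g i (x' i) + ∑ i, ⟪z i, ∑ j, W i j • x' j⟫) (i : Fin m) :
    ∑ j, W i j • x j = 0 := by
  set c := (m : ℝ)⁻¹ • ∑ j, x j with hc
  have hm' : (0 : ℝ) < m := by positivity
  have hl0 : 0 < l := hl.1.1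
  have hcX : c ∈ X := by
    rw [hc, Finset.smul_sum]
    exact hX.sum_mem (fun _ _ => by positivity) (by simp [hm'.ne']) fun i _ => hx i
  have hgap := spectral_gap_vec hm hW hker hl x
  rw [← hc] at hgap
  set N := ∑ i, ‖∑ j, W i j • x j‖ ^ 2 with hN
  set D := ∑ i, ‖x i - c‖ ^ 2 with hD
  have hN0 : 0 ≤ N := by positivity
  have hD0 : 0 ≤ D := by positivity
  have hlip (i : Fin m) : g i c - g i (x i) ≤ M * ‖x i - c‖ := by
    have := hX.norm_image_sub_le_of_norm_fderiv_le (f := g i) (C := M)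
      (fun y _ => (hg i) y) (fun y hy => by
        have := hgrad i y hy
        rwa [gradient, LinearIsometryEquiv.norm_map] at this) (hx i) hcX
    rw [norm_sub_rev c] at this
    exact (le_abs_self _).trans this
  -- testing the maximality of `z` against the multiple of `W x` of norm `R`
  have hpen : R * √N ≤ ∑ i, ⟪z i, ∑ j, W i j • x j⟫ := by
    have h := hz (fun i => (R / √N) • ∑ j, W i j • x j) (by
      simp only [norm_smul, mul_pow, ← Finset.mul_sum, Real.norm_eq_abs, sq_abs, ← hN]
      rw [div_pow, Real.sq_sqrt hN0]
      rw [div_mul_eq_mul_div]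
      exact div_le_of_le_mul₀ hN0 (by positivity) le_rfl)
    simp only [real_inner_smul_left, real_inner_self_eq_norm_sq, ← Finset.mul_sum, ← hN] at h
    refine le_of_eq_of_le ?_ h
    rcases hN0.eq_or_lt with h0 | hpos
    · simp [← h0]
    · have := Real.sqrt_pos.2 hpos
      field_simp
      rw [Real.sq_sqrt hN0]
  have hcmp := hmin (fun _ => c) fun _ => hcX
  simp only [weighted_sum_const hker, inner_zero_right, Finset.sum_const_zero, add_zero] at hcmp
  have hsum : ∑ i, g i c - ∑ i, g i (x i) ≤ M * ∑ i, ‖x i - c‖ := by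
    rw [← Finset.sum_sub_distrib, Finset.mul_sum]
    exact Finset.sum_le_sum fun i _ => hlip i
  have hcs : (∑ i, ‖x i - c‖) ^ 2 ≤ m * D := by
    simpa using sq_sum_le_card_mul_sum_sq (s := Finset.univ) (f := fun i => ‖x i - c‖)
  have hsq : (R * √N) ^ 2 ≤ (M * ∑ i, ‖x i - c‖) ^ 2 := by
    exact pow_le_pow_left₀ (by positivity) (by linarith) 2
  rw [mul_pow, mul_pow, Real.sq_sqrt hN0, hR2] at hsq
  -- `2 m M² D ≤ R² N ≤ M² (∑ ‖x i - c‖)² ≤ m M² D`, so that `D = 0`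
  have h1 : 2 * m * M ^ 2 * D ≤ M ^ 2 * (m * D) := calc
    2 * m * M ^ 2 * D = 2 * m * M ^ 2 / l ^ 2 * (l ^ 2 * D) := by field_simp
    _ ≤ 2 * m * M ^ 2 / l ^ 2 * N := by gcongr
    _ ≤ M ^ 2 * (∑ i, ‖x i - c‖) ^ 2 := hsq
    _ ≤ M ^ 2 * (m * D) := by gcongr
  have hDz : D = 0 := by
    have : 0 < m * M ^ 2 := by positivity
    nlinarith
  have hxc (j : Fin m) : x j = c := by
    have := (Finset.sum_eq_zero_iff_of_nonneg fun _ _ => by positivity).1 hDz j (Finset.mem_univ j)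
    simpa [sub_eq_zero] using this
  simp only [hxc, weighted_sum_const hker]

/-- The closed Euclidean ball of radius `R` about the origin, for families of `m` vectors
(the norm carried by the function type is the supremum norm instead). -/
def familyBall (m d : ℕ) (R : ℝ) : Set (Fin m → EuclideanSpace ℝ (Fin d)) :=
  {z | ∑ i, ‖z i‖ ^ 2 ≤ R ^ 2}

lemma zero_mem_familyBall (m d : ℕ) (R : ℝ) : 0 ∈ familyBall m d R := by
  simp [familyBall, sq_nonneg]

lemma convex_familyBall (m d : ℕ) (R : ℝ) : Convex ℝ (familyBall m d R) := by
  intro z hz z' hz' a b ha hb hab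
  simp only [familyBall, Set.mem_ofPred_eq] at hz hz' ⊢
  have hterm (i : Fin m) :
      ‖(a • z + b • z') i‖ ^ 2 ≤ a * ‖z i‖ ^ 2 + b * ‖z' i‖ ^ 2 := by
    have h1 : ‖(a • z + b • z') i‖ ≤ a * ‖z i‖ + b * ‖z' i‖ := by
      refine (norm_add_le _ _).trans_eq ?_
      simp [norm_smul, abs_of_nonneg ha, abs_of_nonneg hb]
    refine (pow_le_pow_left₀ (norm_nonneg _) h1 2).trans ?_
    exact (convexOn_pow 2).2 (norm_nonneg (z i)) (norm_nonneg (z' i)) ha hb hab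
  calc ∑ i, ‖(a • z + b • z') i‖ ^ 2 ≤ ∑ i, (a * ‖z i‖ ^ 2 + b * ‖z' i‖ ^ 2) :=
        Finset.sum_le_sum fun i _ => hterm i
    _ = a * ∑ i, ‖z i‖ ^ 2 + b * ∑ i, ‖z' i‖ ^ 2 := by
        rw [Finset.sum_add_distrib, Finset.mul_sum, Finset.mul_sum]
    _ ≤ a * R ^ 2 + b * R ^ 2 := by gcongr
    _ = R ^ 2 := by rw [← add_mul, hab, one_mul]

lemma isCompact_familyBall (m d : ℕ) {R : ℝ} (hR : 0 ≤ R) : IsCompact (familyBall m d R) := by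
  refine Metric.isCompact_of_isClosed_isBounded ?_ ?_
  · exact isClosed_le (by fun_prop) continuous_const
  · refine Metric.isBounded_closedBall.subset (t := Metric.closedBall 0 R) fun z hz => ?_
    rw [mem_closedBall_zero_iff, pi_norm_le_iff_of_nonneg hR]
    intro i
    refine (sq_le_sq₀ (norm_nonneg _) hR).1 ?_
    exact (Finset.single_le_sum (f := fun i => ‖z i‖ ^ 2) (fun _ _ => by positivity)
      (Finset.mem_univ i)).trans hz

lemma coupling_right {m d : ℕ} (W : Matrix (Fin m) (Fin m) ℝ)
    (z x x' : Fin m → EuclideanSpace ℝ (Fin d)) (a b : ℝ) :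
    ∑ i, ⟪z i, ∑ j, W i j • (a • x + b • x') j⟫ =
      a * ∑ i, ⟪z i, ∑ j, W i j • x j⟫ + b * ∑ i, ⟪z i, ∑ j, W i j • x' j⟫ := by
  rw [Finset.mul_sum, Finset.mul_sum, ← Finset.sum_add_distrib]
  refine Finset.sum_congr rfl fun i _ => ?_
  rw [← real_inner_smul_right, ← real_inner_smul_right, ← inner_add_right, Finset.smul_sum,
    Finset.smul_sum, ← Finset.sum_add_distrib]
  congr 1
  refine Finset.sum_congr rfl fun j _ => ?_
  simp only [Pi.add_apply, Pi.smul_apply]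
  module

lemma coupling_left {m d : ℕ} (W : Matrix (Fin m) (Fin m) ℝ)
    (z z' x : Fin m → EuclideanSpace ℝ (Fin d)) (a b : ℝ) :
    ∑ i, ⟪(a • z + b • z') i, ∑ j, W i j • x j⟫ =
      a * ∑ i, ⟪z i, ∑ j, W i j • x j⟫ + b * ∑ i, ⟪z' i, ∑ j, W i j • x j⟫ := by
  rw [Finset.mul_sum, Finset.mul_sum, ← Finset.sum_add_distrib]
  refine Finset.sum_congr rfl fun i _ => ?_
  simp [inner_add_left, real_inner_smul_left]

theorem stmt_3
    (m dx dp dy dq : ℕ) (hm : 0 < m)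
    (Xb : Set (EuclideanSpace ℝ (Fin dx))) (Yb : Set (EuclideanSpace ℝ (Fin dy)))
    (Pc : Fin m → Set (EuclideanSpace ℝ (Fin dp)))
    (Qc : Fin m → Set (EuclideanSpace ℝ (Fin dq)))
    (hXb : Xb.Nonempty ∧ Convex ℝ Xb ∧ IsCompact Xb)
    (hYb : Yb.Nonempty ∧ Convex ℝ Yb ∧ IsCompact Yb)
    (hPc : ∀ i, (Pc i).Nonempty ∧ Convex ℝ (Pc i) ∧ IsCompact (Pc i))
    (hQc : ∀ i, (Qc i).Nonempty ∧ Convex ℝ (Qc i) ∧ IsCompact (Qc i))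
    (f : Fin m → EuclideanSpace ℝ (Fin dx) → EuclideanSpace ℝ (Fin dp) →
         EuclideanSpace ℝ (Fin dy) → EuclideanSpace ℝ (Fin dq) → ℝ)
    (hfdiff : ∀ i, Differentiable ℝ
      (fun t : (EuclideanSpace ℝ (Fin dx) × EuclideanSpace ℝ (Fin dp)) ×
          (EuclideanSpace ℝ (Fin dy) × EuclideanSpace ℝ (Fin dq)) =>
        f i t.1.1 t.1.2 t.2.1 t.2.2))
    (hfconv : ∀ i, ∀ y ∈ Yb, ∀ q ∈ Qc i,
      ConvexOn ℝ (Xb ×ˢ Pc i)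
        (fun t : EuclideanSpace ℝ (Fin dx) × EuclideanSpace ℝ (Fin dp) => f i t.1 t.2 y q))
    (hfconc : ∀ i, ∀ x ∈ Xb, ∀ p ∈ Pc i,
      ConcaveOn ℝ (Yb ×ˢ Qc i)
        (fun t : EuclideanSpace ℝ (Fin dy) × EuclideanSpace ℝ (Fin dq) => f i x p t.1 t.2))
    (Wx Wy : Matrix (Fin m) (Fin m) ℝ)
    (hWxpsd : Wx.PosSemidef) (hWypsd : Wy.PosSemidef)
    (hWxker : ∀ v : Fin m → ℝ, Wx.mulVec v = 0 ↔ ∀ i j, v i = v j)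
    (hWyker : ∀ v : Fin m → ℝ, Wy.mulVec v = 0 ↔ ∀ i j, v i = v j)
    (Mx My : ℝ) (hMx : 0 < Mx) (hMy : 0 < My)
    (hgradx : ∀ i, ∀ x ∈ Xb, ∀ p ∈ Pc i, ∀ y ∈ Yb, ∀ q ∈ Qc i,
      ‖gradient (fun x' => f i x' p y q) x‖ ≤ Mx)
    (hgrady : ∀ i, ∀ x ∈ Xb, ∀ p ∈ Pc i, ∀ y ∈ Yb, ∀ q ∈ Qc i,
      ‖gradient (fun y' => f i x p y' q) y‖ ≤ My)
    (lx ly : ℝ)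
    (hlx : IsLeast {μ : ℝ | 0 < μ ∧ ∃ v : Fin m → ℝ, v ≠ 0 ∧ Wx.mulVec v = μ • v} lx)
    (hly : IsLeast {μ : ℝ | 0 < μ ∧ ∃ v : Fin m → ℝ, v ≠ 0 ∧ Wy.mulVec v = μ • v} ly)
    (RZ RS : ℝ) (hRZ0 : 0 ≤ RZ) (hRS0 : 0 ≤ RS)
    (hRZ : RZ ^ 2 = 2 * m * Mx ^ 2 / lx ^ 2)
    (hRS : RS ^ 2 = 2 * m * My ^ 2 / ly ^ 2) :
    ∃ (xs : Fin m → EuclideanSpace ℝ (Fin dx)) (ps : Fin m → EuclideanSpace ℝ (Fin dp))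
      (ys : Fin m → EuclideanSpace ℝ (Fin dy)) (qs : Fin m → EuclideanSpace ℝ (Fin dq))
      (ss : Fin m → EuclideanSpace ℝ (Fin dy)) (zs : Fin m → EuclideanSpace ℝ (Fin dx)),
      (∀ i, xs i ∈ Xb) ∧ (∀ i, ps i ∈ Pc i) ∧ (∀ i, ys i ∈ Yb) ∧ (∀ i, qs i ∈ Qc i) ∧
      (∀ (y : Fin m → EuclideanSpace ℝ (Fin dy))
          (q : Fin m → EuclideanSpace ℝ (Fin dq)) (z : Fin m → EuclideanSpace ℝ (Fin dx)),
        (∀ i, y i ∈ Yb) → (∀ i, q i ∈ Qc i) →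
          stmt3Lagr f Wx Wy xs ps ss y q z ≤ stmt3Lagr f Wx Wy xs ps ss ys qs zs) ∧
      (∀ (x : Fin m → EuclideanSpace ℝ (Fin dx))
          (p : Fin m → EuclideanSpace ℝ (Fin dp)) (s : Fin m → EuclideanSpace ℝ (Fin dy)),
        (∀ i, x i ∈ Xb) → (∀ i, p i ∈ Pc i) →
          stmt3Lagr f Wx Wy xs ps ss ys qs zs ≤ stmt3Lagr f Wx Wy x p s ys qs zs) ∧
      Real.sqrt (∑ i, ‖ss i‖ ^ 2) ≤ RS ∧ Real.sqrt (∑ i, ‖zs i‖ ^ 2) ≤ RZ := by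
  set U := (Set.univ.pi fun _ : Fin m => Xb) ×ˢ (Set.univ.pi Pc) ×ˢ familyBall m dy RS with hU
  set V := (Set.univ.pi fun _ : Fin m => Yb) ×ˢ (Set.univ.pi Qc) ×ˢ familyBall m dx RZ with hV
  have neU : U.Nonempty :=
    (Set.univ_pi_nonempty_iff.2 fun _ => hXb.1).prod
      ((Set.univ_pi_nonempty_iff.2 fun i => (hPc i).1).prod ⟨0, zero_mem_familyBall _ _ _⟩)
  have neV : V.Nonempty :=
    (Set.univ_pi_nonempty_iff.2 fun _ => hYb.1).prod
      ((Set.univ_pi_nonempty_iff.2 fun i => (hQc i).1).prod ⟨0, zero_mem_familyBall _ _ _⟩)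
  have cU : Convex ℝ U :=
    (convex_pi fun _ _ => hXb.2.1).prod
      ((convex_pi fun i _ => (hPc i).2.1).prod (convex_familyBall _ _ _))
  have cV : Convex ℝ V :=
    (convex_pi fun _ _ => hYb.2.1).prod
      ((convex_pi fun i _ => (hQc i).2.1).prod (convex_familyBall _ _ _))
  have kU : IsCompact U :=
    (isCompact_univ_pi fun _ => hXb.2.2).prod
      ((isCompact_univ_pi fun i => (hPc i).2.2).prod (isCompact_familyBall _ _ hRS0))
  have kV : IsCompact V :=
    (isCompact_univ_pi fun _ => hYb.2.2).prod
      ((isCompact_univ_pi fun i => (hQc i).2.2).prod (isCompact_familyBall _ _ hRZ0))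
  let L : (Fin m → EuclideanSpace ℝ (Fin dx)) × (Fin m → EuclideanSpace ℝ (Fin dp)) ×
        (Fin m → EuclideanSpace ℝ (Fin dy)) →
      (Fin m → EuclideanSpace ℝ (Fin dy)) × (Fin m → EuclideanSpace ℝ (Fin dq)) ×
        (Fin m → EuclideanSpace ℝ (Fin dx)) → ℝ :=
    fun u v => stmt3Lagr f Wx Wy u.1 u.2.1 u.2.2 v.1 v.2.1 v.2.2
  set_option synthInstance.maxHeartbeats 400000 in
  have hfcont (i : Fin m) := (hfdiff i).continuous
  have hLcont : Continuous fun t : _ × _ => L t.1 t.2 := by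
    simp only [L, stmt3Lagr]
    refine (Continuous.add ?_ (by fun_prop)).add (by fun_prop)
    refine continuous_finsetSum _ fun i _ => ?_
    exact (hfcont i).comp (f := fun t : ((Fin m → EuclideanSpace ℝ (Fin dx)) ×
        (Fin m → EuclideanSpace ℝ (Fin dp)) × (Fin m → EuclideanSpace ℝ (Fin dy))) ×
        ((Fin m → EuclideanSpace ℝ (Fin dy)) × (Fin m → EuclideanSpace ℝ (Fin dq)) ×
        (Fin m → EuclideanSpace ℝ (Fin dx))) =>
      ((t.1.1 i, t.1.2.1 i), (t.2.1 i, t.2.2.1 i))) (by fun_prop)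
  have hLconv (v) (hv : v ∈ V) : ConvexOn ℝ U fun u => L u v := by
    refine ⟨cU, fun u hu u' hu' a b ha hb hab => ?_⟩
    have hfsum : ∑ i, f i ((a • u + b • u').1 i) ((a • u + b • u').2.1 i) (v.1 i) (v.2.1 i) ≤
        a * ∑ i, f i (u.1 i) (u.2.1 i) (v.1 i) (v.2.1 i) +
          b * ∑ i, f i (u'.1 i) (u'.2.1 i) (v.1 i) (v.2.1 i) := by
      rw [Finset.mul_sum, Finset.mul_sum, ← Finset.sum_add_distrib]
      refine Finset.sum_le_sum fun i _ => ?_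
      exact (hfconv i _ (hv.1 i trivial) _ (hv.2.1 i trivial)).2
        (x := (u.1 i, u.2.1 i)) ⟨hu.1 i trivial, hu.2.1 i trivial⟩
        (y := (u'.1 i, u'.2.1 i)) ⟨hu'.1 i trivial, hu'.2.1 i trivial⟩ ha hb hab
    have h1 := coupling_right Wx v.2.2 u.1 u'.1 a b
    have h2 := coupling_left Wy u.2.2 u'.2.2 v.1 a b
    simp only [L, stmt3Lagr, smul_eq_mul, Prod.fst_add, Prod.snd_add, Prod.smul_fst,
      Prod.smul_snd] at hfsum ⊢
    rw [h1, h2]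
    linarith
  have hLconc (u) (hu : u ∈ U) : ConcaveOn ℝ V fun v => L u v := by
    refine ⟨cV, fun v hv v' hv' a b ha hb hab => ?_⟩
    have hfsum : a * ∑ i, f i (u.1 i) (u.2.1 i) (v.1 i) (v.2.1 i) +
          b * ∑ i, f i (u.1 i) (u.2.1 i) (v'.1 i) (v'.2.1 i) ≤
        ∑ i, f i (u.1 i) (u.2.1 i) ((a • v + b • v').1 i) ((a • v + b • v').2.1 i) := by
      rw [Finset.mul_sum, Finset.mul_sum, ← Finset.sum_add_distrib]
      refine Finset.sum_le_sum fun i _ => ?_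
      exact (hfconc i _ (hu.1 i trivial) _ (hu.2.1 i trivial)).2
        (x := (v.1 i, v.2.1 i)) ⟨hv.1 i trivial, hv.2.1 i trivial⟩
        (y := (v'.1 i, v'.2.1 i)) ⟨hv'.1 i trivial, hv'.2.1 i trivial⟩ ha hb hab
    have h1 := coupling_left Wx v.2.2 v'.2.2 u.1 a b
    have h2 := coupling_right Wy u.2.2 v.1 v'.1 a b
    simp only [L, stmt3Lagr, smul_eq_mul, Prod.fst_add, Prod.snd_add, Prod.smul_fst,
      Prod.smul_snd] at hfsum ⊢
    rw [h1, h2]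
    linarith
  obtain ⟨⟨x, p, s⟩, ⟨hx, hp, hs⟩, ⟨y, q, z⟩, ⟨hy, hq, hz⟩, hsad⟩ :=
    Sion.exists_isSaddlePointOn (f := L) neU cU kU
      (fun v _ => (hLcont.comp (.prodMk_left v)).lowerSemicontinuous.lowerSemicontinuousOn _)
      (fun v hv => (hLconv v hv).quasiconvexOn) cV neV kV
      (fun u _ => (hLcont.comp (.prodMk_right u)).upperSemicontinuous.upperSemicontinuousOn _)
      (fun u hu => (hLconc u hu).quasiconcaveOn)
  have hsad' (x' p' s' y' q' z') (hu : (x', p', s') ∈ U) (hv : (y', q', z') ∈ V) :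
      stmt3Lagr f Wx Wy x p s y' q' z' ≤ stmt3Lagr f Wx Wy x' p' s' y q z :=
    hsad (x', p', s') hu (y', q', z') hv
  simp only [Set.mem_univ_pi] at hx hp hy hq
  have hWx : ∀ i, ∑ j, Wx i j • x j = 0 :=
    consensus_of_saddle (z := z) (g := fun i x' => f i x' (p i) (y i) (q i)) hm hWxpsd hWxker hlx
      hXb.2.1
      (fun i => (hfdiff i).comp (g := fun t :
          (EuclideanSpace ℝ (Fin dx) × EuclideanSpace ℝ (Fin dp)) × (EuclideanSpace ℝ (Fin dy) × EuclideanSpace ℝ (Fin dq)) =>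
        f i t.1.1 t.1.2 t.2.1 t.2.2) (f := fun x' => ((x', p i), (y i, q i))) (by fun_prop))
      hMx hRZ0 hRZ
      (fun i x' hx' => hgradx i x' hx' _ (hp i) _ (hy i) _ (hq i)) hx
      (fun z' hz' => by
        have := hsad' x p s y q z' (by simp [*]) (by simp [*]; exact hz')
        simp only [stmt3Lagr] at this
        linarith)
      (fun x' hx' => by
        have := hsad' x' p s y q z (by simp [*]) (by simp [*])
        simp only [stmt3Lagr] at this
        linarith)
  have hWy : ∀ i, ∑ j, Wy i j • y j = 0 :=
    consensus_of_saddle (z := fun i => -s i) (g := fun i y' => -f i (x i) (p i) y' (q i)) hm hWypsd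
      hWyker hly hYb.2.1
      (fun i => ((hfdiff i).comp (g := fun t :
          (EuclideanSpace ℝ (Fin dx) × EuclideanSpace ℝ (Fin dp)) × (EuclideanSpace ℝ (Fin dy) × EuclideanSpace ℝ (Fin dq)) =>
        f i t.1.1 t.1.2 t.2.1 t.2.2) (f := fun y' => ((x i, p i), (y', q i))) (by fun_prop)).neg)
      hMy hRS0 hRS
      (fun i y' hy' => by
        have := hgrady i _ (hx i) _ (hp i) y' hy' _ (hq i)
        rw [gradient, LinearIsometryEquiv.norm_map] at this ⊢
        rwa [fderiv_fun_neg, norm_neg]) hy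
      (fun s' hs' => by
        have := hsad' x p (fun i => -s' i) y q z
          (by simp [*]; simpa [familyBall] using hs') (by simp [*])
        simp only [stmt3Lagr, inner_neg_left, Finset.sum_neg_distrib] at this ⊢
        linarith)
      (fun y' hy' => by
        have := hsad' x p s y' q z (by simp [*]) (by simp [*])
        simp only [stmt3Lagr, inner_neg_left, Finset.sum_neg_distrib] at this ⊢
        linarith)
  refine ⟨x, p, y, q, s, z, hx, hp, hy, hq, fun y' q' z' hy' hq' => ?_,
    fun x' p' s' hx' hp' => ?_, Real.sqrt_le_iff.2 ⟨hRS0, hs⟩, Real.sqrt_le_iff.2 ⟨hRZ0, hz⟩⟩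
  · have := hsad' x p s y' q' z (by simp [*]) (by simp [*])
    simpa only [stmt3Lagr, hWx, inner_zero_right] using this
  · have := hsad' x' p' s y q z (by simp [*]) (by simp [*])
    simpa only [stmt3Lagr, hWy, inner_zero_right] using this
end

section
/- Let Q ⊆ ℝ^n be a nonempty closed convex set, ‖·‖ a norm on ℝ^n with dual norm ‖g‖_* = sup{⟨g,t⟩ : ‖t‖ ≤ 1}, d : ℝ^n → ℝ differentiable and 1-strongly convex with respect to ‖·‖ (i.e. d(tζ + (1−t)θ) ≤ t d(ζ) + (1−t) d(θ) − (t(1−t)/2)‖ζ−θ‖² for t ∈ [0,1]), and B(ζ,θ) = d(ζ) − d(θ) − ⟨∇d(θ), ζ−θ⟩ the associated Bregman divergence. Let g : Q → ℝ^n satisfy ‖g(ζ) − g(θ)‖_* ≤ L‖ζ − θ‖ for all ζ, θ ∈ Q with L > 0, and set α = 1/L. Suppose sequences (ζ^k)_{k≥0} and (ζ^{k+1/2})_{k≥0} in Q satisfy, for every k ≥ 0 and every ζ ∈ Q, the optimality conditions ⟨α g(ζ^k) + ∇d(ζ^{k+1/2}) − ∇d(ζ^k), ζ − ζ^{k+1/2}⟩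 ≥ 0 and ⟨α g(ζ^{k+1/2}) + ∇d(ζ^{k+1}) − ∇d(ζ^k), ζ − ζ^{k+1}⟩ ≥ 0. Then for every k ≥ 1 and every ζ ∈ Q: Σ_{i=0}^{k−1} ⟨g(ζ^{i+1/2}), ζ^{i+1/2} − ζ⟩ ≤ L · B(ζ, ζ^0). -/
open RealInnerProductSpace

/-!
One extragradient (mirror-prox) step satisfies
`(1 / L) * ⟪g (ζh k), ζh k - ξ⟫ ≤ B ξ (ζ k) - B ξ (ζ (k + 1))`; summing over `k` telescopes, and
the last divergence is nonnegative.

For the one-step bound, split `ζh k - ξ = (ζh k - ζ (k + 1)) + (ζ (k + 1) - ξ)` and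
`g (ζh k) = (g (ζh k) - g (ζ k)) + g (ζ k)`. The two optimality conditions together with the
three-point identity of the Bregman divergence bound everything except the cross term
`(1 / L) * ⟪g (ζh k) - g (ζ k), ζh k - ζ (k + 1)⟫` by
`B ξ (ζ k) - B ξ (ζ (k + 1)) - B (ζ (k + 1)) (ζh k) - B (ζh k) (ζ k)`.
The generalized Cauchy–Schwarz inequality (`inner_le_dual_mul`), the Lipschitz bound and
`a * b ≤ (a ^ 2 + b ^ 2) / 2` show that the last two divergences absorb the cross term, since
`B x y ≥ N (x - y) ^ 2 / 2` (`half_sq_le_bregman`).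
-/

/-- In finite dimension a linear functional is bounded with respect to any norm `N`. This makes
the set defining the dual norm bounded above, so that its `sSup` is a genuine supremum. -/
lemma exists_bound_of_norm {E : Type*} [AddCommGroup E] [Module ℝ E] [FiniteDimensional ℝ E]
    (N : E → ℝ) (hN0 : ∀ t, 0 ≤ N t) (hNdef : ∀ t, N t = 0 ↔ t = 0)
    (hNsmul : ∀ (c : ℝ) t, N (c • t) = |c| * N t)
    (hNtri : ∀ t t', N (t + t') ≤ N t + N t') (f : E →ₗ[ℝ] ℝ) :
    ∃ C, 0 ≤ C ∧ ∀ t, f t ≤ C * N t := by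
  let _ : Norm E := ⟨N⟩
  have core : NormedSpace.Core ℝ E :=
    { norm_nonneg := hN0
      norm_smul := hNsmul
      norm_triangle := hNtri
      norm_eq_zero_iff := hNdef }
  let _ : NormedAddCommGroup E := NormedAddCommGroup.ofCore core
  let _ : NormedSpace ℝ E := NormedSpace.ofCore core
  refine ⟨‖LinearMap.toContinuousLinearMap f‖, norm_nonneg _, fun t => ?_⟩
  exact (le_abs_self _).trans ((LinearMap.toContinuousLinearMap f).le_opNorm t)

lemma inner_le_dual_mul {E : Type*} [NormedAddCommGroup E] [InnerProductSpace ℝ E]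
    [FiniteDimensional ℝ E]
    (N : E → ℝ) (hN0 : ∀ t, 0 ≤ N t) (hNdef : ∀ t, N t = 0 ↔ t = 0)
    (hNsmul : ∀ (c : ℝ) t, N (c • t) = |c| * N t)
    (hNtri : ∀ t t', N (t + t') ≤ N t + N t') (v t : E) :
    ⟪v, t⟫ ≤ sSup {r : ℝ | ∃ t, N t ≤ 1 ∧ r = ⟪v, t⟫} * N t := by
  obtain ⟨C, hC0, hC⟩ := exists_bound_of_norm N hN0 hNdef hNsmul hNtri (innerₛₗ ℝ v)
  have hbdd : BddAbove {r : ℝ | ∃ t, N t ≤ 1 ∧ r = ⟪v, t⟫} := by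
    refine ⟨C, ?_⟩
    rintro r ⟨s, hs, rfl⟩
    exact (hC s).trans (mul_le_of_le_one_right hC0 hs)
  by_cases ht : t = 0
  · simp [ht, (hNdef 0).2 rfl]
  have hpos : 0 < N t := (hN0 t).lt_of_ne fun h => ht ((hNdef t).1 h.symm)
  have hle : (N t)⁻¹ * ⟪v, t⟫ ≤ sSup {r : ℝ | ∃ t, N t ≤ 1 ∧ r = ⟪v, t⟫} := by
    refine le_csSup hbdd ⟨(N t)⁻¹ • t, ?_, ?_⟩
    · rw [hNsmul, abs_of_pos (inv_pos.2 hpos), inv_mul_cancel₀ hpos.ne']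
    · rw [real_inner_smul_right]
  calc ⟪v, t⟫ = (N t)⁻¹ * ⟪v, t⟫ * N t := by field_simp
    _ ≤ _ := mul_le_mul_of_nonneg_right hle hpos.le

/-- Strong convexity bounds the difference quotient of `d` at `y` in the direction `x - y`;
letting the step tend to `0` from the right gives the lower bound on the divergence. -/
lemma half_sq_le_bregman {E : Type*} [NormedAddCommGroup E] [InnerProductSpace ℝ E]
    [CompleteSpace E] (N : E → ℝ) (d : E → ℝ) (hd : Differentiable ℝ d)
    (hdsc : ∀ ζ θ : E, ∀ t ∈ Set.Icc (0:ℝ) 1,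
      d (t • ζ + (1 - t) • θ) ≤ t * d ζ + (1 - t) * d θ - t * (1 - t) / 2 * (N (ζ - θ)) ^ 2)
    (x y : E) : (N (x - y)) ^ 2 / 2 ≤ d x - d y - ⟪gradient d y, x - y⟫ := by
  have hderiv : HasDerivAt (fun t : ℝ => d (y + t • (x - y))) ⟪gradient d y, x - y⟫ 0 := by
    have h1 : HasFDerivAt d (InnerProductSpace.toDual ℝ E (gradient d y))
        (y + (0 : ℝ) • (x - y)) := by
      simpa using (hd y).hasGradientAt.hasFDerivAt
    have h2 : HasDerivAt (fun t : ℝ => y + t • (x - y)) (x - y) 0 := by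
      simpa using ((hasDerivAt_id (0 : ℝ)).smul_const (x - y)).const_add y
    exact h1.comp_hasDerivAt (0 : ℝ) h2
  have hlim := hderiv.tendsto_slope_zero_right
  have hlim2 : Filter.Tendsto (fun t : ℝ => d x - d y - (1 - t) / 2 * (N (x - y)) ^ 2)
      (nhdsWithin 0 (Set.Ioi 0)) (nhds (d x - d y - (1 - 0) / 2 * (N (x - y)) ^ 2)) := by
    apply Filter.Tendsto.mono_left _ nhdsWithin_le_nhds
    apply Continuous.tendsto
    fun_prop
  have hle := le_of_tendsto_of_tendsto hlim hlim2 (by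
    filter_upwards [Ioo_mem_nhdsGT (zero_lt_one (α := ℝ))] with t ht
    have h := hdsc x y t ⟨ht.1.le, ht.2.le⟩
    have e : t • x + (1 - t) • y = y + t • (x - y) := by module
    rw [e] at h
    simp only [zero_add, zero_smul, add_zero, smul_eq_mul]
    rw [inv_mul_le_iff₀ ht.1]
    linarith)
  linarith

theorem stmt_5 (n : ℕ) (Q : Set (EuclideanSpace ℝ (Fin n)))
    (hQne : Q.Nonempty) (hQclosed : IsClosed Q) (hQconv : Convex ℝ Q)
    (N : EuclideanSpace ℝ (Fin n) → ℝ)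
    (hN0 : ∀ t, 0 ≤ N t) (hNdef : ∀ t, N t = 0 ↔ t = 0)
    (hNsmul : ∀ (c : ℝ) t, N (c • t) = |c| * N t)
    (hNtri : ∀ t t', N (t + t') ≤ N t + N t')
    (Nd : EuclideanSpace ℝ (Fin n) → ℝ)
    (hNd : ∀ g, Nd g = sSup {r : ℝ | ∃ t, N t ≤ 1 ∧ r = ⟪g, t⟫})
    (d : EuclideanSpace ℝ (Fin n) → ℝ) (hd : Differentiable ℝ d)
    (hdsc : ∀ ζ θ : EuclideanSpace ℝ (Fin n), ∀ t ∈ Set.Icc (0:ℝ) 1,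
      d (t • ζ + (1 - t) • θ) ≤ t * d ζ + (1 - t) * d θ - t * (1 - t) / 2 * (N (ζ - θ)) ^ 2)
    (B : EuclideanSpace ℝ (Fin n) → EuclideanSpace ℝ (Fin n) → ℝ)
    (hB : ∀ ζ θ, B ζ θ = d ζ - d θ - ⟪gradient d θ, ζ - θ⟫)
    (g : EuclideanSpace ℝ (Fin n) → EuclideanSpace ℝ (Fin n))
    (L : ℝ) (hL : 0 < L)
    (hgLip : ∀ ζ ∈ Q, ∀ θ ∈ Q, Nd (g ζ - g θ) ≤ L * N (ζ - θ))
    (ζ ζh : ℕ → EuclideanSpace ℝ (Fin n))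
    (hζQ : ∀ k, ζ k ∈ Q) (hζhQ : ∀ k, ζh k ∈ Q)
    (hopt1 : ∀ k, ∀ ξ ∈ Q,
      0 ≤ ⟪(1 / L) • g (ζ k) + gradient d (ζh k) - gradient d (ζ k), ξ - ζh k⟫)
    (hopt2 : ∀ k, ∀ ξ ∈ Q,
      0 ≤ ⟪(1 / L) • g (ζh k) + gradient d (ζ (k + 1)) - gradient d (ζ k), ξ - ζ (k + 1)⟫) :
    ∀ k, 1 ≤ k → ∀ ξ ∈ Q,
      ∑ i ∈ Finset.range k, ⟪g (ζh i), ζh i - ξ⟫ ≤ L * B ξ (ζ 0) := by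
  have hBlow : ∀ x y, (N (x - y)) ^ 2 / 2 ≤ B x y := fun x y => by
    rw [hB]
    exact half_sq_le_bregman N d hd hdsc x y
  have hsymm : ∀ x y, N (x - y) = N (y - x) := fun x y => by
    have h := hNsmul (-1) (y - x)
    simpa using h
  have three : ∀ x y z, ⟪gradient d y - gradient d z, x - y⟫ = B x z - B x y - B y z := by
    intro x y z
    rw [hB, hB, hB]
    simp only [inner_sub_left, inner_sub_right]
    ring
  have step : ∀ k, ∀ ξ ∈ Q, ⟪g (ζh k), ζh k - ξ⟫ ≤ L * (B ξ (ζ k) - B ξ (ζ (k + 1))) := by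
    intro k ξ hξ
    have h1 := hopt1 k _ (hζQ (k + 1))
    have h2 := hopt2 k ξ hξ
    rw [add_sub_assoc, inner_add_left, real_inner_smul_left, three] at h1 h2
    have hcross : ⟪g (ζh k) - g (ζ k), ζh k - ζ (k + 1)⟫
        ≤ L * (B (ζ (k + 1)) (ζh k) + B (ζh k) (ζ k)) := by
      have hcs := inner_le_dual_mul N hN0 hNdef hNsmul hNtri
        (g (ζh k) - g (ζ k)) (ζh k - ζ (k + 1))
      rw [← hNd] at hcs
      have hlip := mul_le_mul_of_nonneg_right (hgLip _ (hζhQ k) _ (hζQ k))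
        (hN0 (ζh k - ζ (k + 1)))
      have hamgm : N (ζh k - ζ k) * N (ζh k - ζ (k + 1))
          ≤ B (ζ (k + 1)) (ζh k) + B (ζh k) (ζ k) := by
        have ha := hBlow (ζ (k + 1)) (ζh k)
        have hb := hBlow (ζh k) (ζ k)
        rw [hsymm] at ha
        linarith [two_mul_le_add_sq (N (ζh k - ζ k)) (N (ζh k - ζ (k + 1)))]
      have := mul_le_mul_of_nonneg_left hamgm hL.le
      linarith
    have h12 := mul_nonneg hL.le (add_nonneg h1 h2)
    have e : L * (1 / L * ⟪g (ζ k), ζ (k + 1) - ζh k⟫ +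
          (B (ζ (k + 1)) (ζ k) - B (ζ (k + 1)) (ζh k) - B (ζh k) (ζ k)) +
        (1 / L * ⟪g (ζh k), ξ - ζ (k + 1)⟫ +
          (B ξ (ζ k) - B ξ (ζ (k + 1)) - B (ζ (k + 1)) (ζ k)))) =
        ⟪g (ζ k), ζ (k + 1) - ζh k⟫ + ⟪g (ζh k), ξ - ζ (k + 1)⟫ +
        L * (B ξ (ζ k) - B ξ (ζ (k + 1)) - (B (ζ (k + 1)) (ζh k) + B (ζh k) (ζ k))) := by
      field_simp
      ring
    rw [e] at h12
    simp only [inner_sub_left, inner_sub_right] at h12 hcross ⊢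
    linarith
  intro k _ ξ hξ
  calc ∑ i ∈ Finset.range k, ⟪g (ζh i), ζh i - ξ⟫
      ≤ ∑ i ∈ Finset.range k, L * (B ξ (ζ i) - B ξ (ζ (i + 1))) :=
        Finset.sum_le_sum fun i _ => step i ξ hξ
    _ = L * (B ξ (ζ 0) - B ξ (ζ k)) := by
        rw [← Finset.mul_sum, Finset.sum_range_sub' (fun i => B ξ (ζ i))]
    _ ≤ L * B ξ (ζ 0) := by
        have hnonneg : 0 ≤ B ξ (ζ k) := le_trans (by positivity) (hBlow ξ (ζ k))
        exact mul_le_mul_of_nonneg_left (by linarith) hL.le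
end

section
/- Let x ∈ X and define x̄ ∈ X by x̄_i = (1/m) Σ_{j=1}^m x_j for every i (x̄ ∈ X since X̄ is convex). Then for all p ∈ P, y ∈ Y, q ∈ Q: F(x̄, p, y, q) ≤ F(x, p, y, q) + √m · M_x · ‖𝐖_x x‖₂ / λ_min⁺(W_x). -/
open RealInnerProductSpace

/-!
On the convex set `Xb` the gradient bound makes each `f i` Lipschitz in its first argument with
constant `Mx`, so replacing every `x i` by the mean `xbar` costs at most `Mx * ∑ i, ‖xbar - x i‖`,
which Cauchy–Schwarz bounds by `Mx * √m * √(∑ i, ‖xbar - x i‖ ^ 2)`.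

The deviation from the mean is controlled by the spectral gap: expanding a vector with zero sum in
an orthonormal eigenbasis of `W`, only eigenvectors with positive eigenvalue, hence eigenvalue at
least `l`, contribute, because the kernel of `W` consists of constant vectors. So `W` expands such
vectors by a factor at least `l` (`sq_gap_le`), and applying this to each coordinate gives the
vector-valued version (`sq_gap_le_euclidean`).
-/

/-- Spectral gap estimate: a symmetric positive semidefinite matrix whose kernel consists of
constant vectors, and whose positive eigenvalues are all at least `l`, expands zero-sum vectors by
a factor at least `l`. -/
lemma sq_gap_le {m : ℕ} {W : Matrix (Fin m) (Fin m) ℝ} (hW : W.PosSemidef)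
    (hker : ∀ v : Fin m → ℝ, W.mulVec v = 0 → ∀ i j, v i = v j) {l : ℝ} (hl : 0 < l)
    (hmin : ∀ μ : ℝ, 0 < μ → (∃ v : Fin m → ℝ, v ≠ 0 ∧ W.mulVec v = μ • v) → l ≤ μ)
    (v : Fin m → ℝ) (hv : ∑ i, v i = 0) :
    l ^ 2 * ∑ i, v i ^ 2 ≤ ∑ i, (W.mulVec v) i ^ 2 := by
  have hH := hW.isHermitian
  set b := hH.eigenvectorBasis with hb
  have parseval : ∀ w : Fin m → ℝ, ∑ i, w i ^ 2 = ∑ i, (w ⬝ᵥ (b i : Fin m → ℝ)) ^ 2 := by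
    intro w
    have h := b.sum_sq_norm_inner_right (WithLp.toLp 2 w)
    rw [EuclideanSpace.norm_sq_eq] at h
    simpa [PiLp.inner_apply, dotProduct] using h.symm
  have hEig : ∀ i, W.mulVec (b i) = hH.eigenvalues i • (b i : Fin m → ℝ) := fun i =>
    hH.mulVec_eigenvectorBasis i
  have hcoef : ∀ i, W.mulVec v ⬝ᵥ (b i : Fin m → ℝ)
      = hH.eigenvalues i * (v ⬝ᵥ (b i : Fin m → ℝ)) := by
    intro i
    have hT : W.transpose = W := by simpa [Matrix.IsHermitian] using hH
    rw [← smul_eq_mul, ← dotProduct_smul, ← hEig i, Matrix.dotProduct_mulVec,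
      ← Matrix.mulVec_transpose, hT]
  rw [parseval v, parseval (W.mulVec v), Finset.mul_sum]
  refine Finset.sum_le_sum fun i _ => ?_
  rw [hcoef, mul_pow]
  rcases (hW.eigenvalues_nonneg i).eq_or_lt with h0 | hpos
  · -- A kernel eigenvector is constant, hence orthogonal to the zero-sum vector `v`.
    have hconst := hker (b i) (by rw [hEig, ← h0, zero_smul])
    have hz : v ⬝ᵥ (b i : Fin m → ℝ) = 0 := by
      calc v ⬝ᵥ (b i : Fin m → ℝ) = ∑ j, v j * b i i :=
            Finset.sum_congr rfl fun j _ => by rw [hconst j i]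
        _ = 0 := by rw [← Finset.sum_mul, hv, zero_mul]
    simp [hz]
  · have hne : (b i : Fin m → ℝ) ≠ 0 := fun h =>
      b.orthonormal.ne_zero i (by ext j; exact congrFun h j)
    have := hmin _ hpos ⟨_, hne, hEig i⟩
    gcongr

/-- The spectral gap estimate for a family of Euclidean vectors, measured from its mean. -/
lemma sq_gap_le_euclidean {m d : ℕ} (hm : 0 < m) {W : Matrix (Fin m) (Fin m) ℝ}
    (hW : W.PosSemidef)
    (hker : ∀ v : Fin m → ℝ, W.mulVec v = 0 ↔ ∀ i j, v i = v j) {l : ℝ} (hl : 0 < l)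
    (hmin : ∀ μ : ℝ, 0 < μ → (∃ v : Fin m → ℝ, v ≠ 0 ∧ W.mulVec v = μ • v) → l ≤ μ)
    (x : Fin m → EuclideanSpace ℝ (Fin d)) :
    l ^ 2 * ∑ i, ‖(m : ℝ)⁻¹ • ∑ j, x j - x i‖ ^ 2 ≤ ∑ i, ‖∑ j, W i j • x j‖ ^ 2 := by
  have hm' : (m : ℝ) ≠ 0 := by positivity
  simp only [EuclideanSpace.norm_sq_eq]
  conv_lhs => rw [Finset.sum_comm, Finset.mul_sum]
  conv_rhs => rw [Finset.sum_comm]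
  refine Finset.sum_le_sum fun k _ => ?_
  set c : ℝ := ((m : ℝ)⁻¹ • ∑ j, x j) k with hc
  have hcs : c = (m : ℝ)⁻¹ * ∑ j, x j k := by simp [hc]
  have h := sq_gap_le hW (fun v => (hker v).1) hl hmin (fun i => c - x i k) (by
    rw [Finset.sum_sub_distrib, hcs]
    simp
    field_simp
    simp)
  have hWc : W.mulVec (fun _ => c) = 0 := (hker _).2 fun _ _ => rfl
  have hWv : W.mulVec (fun i => c - x i k) = - W.mulVec (fun i => x i k) := by
    have : (fun i => c - x i k) = (fun _ => c) - fun i => x i k := rfl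
    rw [this, Matrix.mulVec_sub, hWc, zero_sub]
  rw [hWv] at h
  simpa [Matrix.mulVec, dotProduct, hc] using h

theorem stmt_7
    (m dx dp dy dq : ℕ) (hm : 0 < m)
    (Xb : Set (EuclideanSpace ℝ (Fin dx))) (Yb : Set (EuclideanSpace ℝ (Fin dy)))
    (Pc : Fin m → Set (EuclideanSpace ℝ (Fin dp)))
    (Qc : Fin m → Set (EuclideanSpace ℝ (Fin dq)))
    (hXb : Xb.Nonempty ∧ Convex ℝ Xb ∧ IsCompact Xb)
    (hYb : Yb.Nonempty ∧ Convex ℝ Yb ∧ IsCompact Yb)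
    (hPc : ∀ i, (Pc i).Nonempty ∧ Convex ℝ (Pc i) ∧ IsCompact (Pc i))
    (hQc : ∀ i, (Qc i).Nonempty ∧ Convex ℝ (Qc i) ∧ IsCompact (Qc i))
    (f : Fin m → EuclideanSpace ℝ (Fin dx) → EuclideanSpace ℝ (Fin dp) →
         EuclideanSpace ℝ (Fin dy) → EuclideanSpace ℝ (Fin dq) → ℝ)
    (hfdiff : ∀ i, Differentiable ℝ
      (fun t : (EuclideanSpace ℝ (Fin dx) × EuclideanSpace ℝ (Fin dp)) ×
          (EuclideanSpace ℝ (Fin dy) × EuclideanSpace ℝ (Fin dq)) =>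
        f i t.1.1 t.1.2 t.2.1 t.2.2))
    (hfconv : ∀ i, ∀ y ∈ Yb, ∀ q ∈ Qc i,
      ConvexOn ℝ (Xb ×ˢ Pc i)
        (fun t : EuclideanSpace ℝ (Fin dx) × EuclideanSpace ℝ (Fin dp) => f i t.1 t.2 y q))
    (hfconc : ∀ i, ∀ x ∈ Xb, ∀ p ∈ Pc i,
      ConcaveOn ℝ (Yb ×ˢ Qc i)
        (fun t : EuclideanSpace ℝ (Fin dy) × EuclideanSpace ℝ (Fin dq) => f i x p t.1 t.2))
    (Wx Wy : Matrix (Fin m) (Fin m) ℝ)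
    (hWxpsd : Wx.PosSemidef) (hWypsd : Wy.PosSemidef)
    (hWxker : ∀ v : Fin m → ℝ, Wx.mulVec v = 0 ↔ ∀ i j, v i = v j)
    (hWyker : ∀ v : Fin m → ℝ, Wy.mulVec v = 0 ↔ ∀ i j, v i = v j)
    (Mx My : ℝ) (hMx : 0 < Mx) (hMy : 0 < My)
    (hgradx : ∀ i, ∀ x ∈ Xb, ∀ p ∈ Pc i, ∀ y ∈ Yb, ∀ q ∈ Qc i,
      ‖gradient (fun x' => f i x' p y q) x‖ ≤ Mx)
    (hgrady : ∀ i, ∀ x ∈ Xb, ∀ p ∈ Pc i, ∀ y ∈ Yb, ∀ q ∈ Qc i,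
      ‖gradient (fun y' => f i x p y' q) y‖ ≤ My)
    (lx ly : ℝ)
    (hlx : IsLeast {μ : ℝ | 0 < μ ∧ ∃ v : Fin m → ℝ, v ≠ 0 ∧ Wx.mulVec v = μ • v} lx)
    (hly : IsLeast {μ : ℝ | 0 < μ ∧ ∃ v : Fin m → ℝ, v ≠ 0 ∧ Wy.mulVec v = μ • v} ly)
    (x : Fin m → EuclideanSpace ℝ (Fin dx)) (hx : ∀ i, x i ∈ Xb)
    (xbar : EuclideanSpace ℝ (Fin dx)) (hxbar : xbar = (m : ℝ)⁻¹ • ∑ j, x j) :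
    ∀ (p : Fin m → EuclideanSpace ℝ (Fin dp)) (y : Fin m → EuclideanSpace ℝ (Fin dy))
      (q : Fin m → EuclideanSpace ℝ (Fin dq)),
      (∀ i, p i ∈ Pc i) → (∀ i, y i ∈ Yb) → (∀ i, q i ∈ Qc i) →
      ∑ i, f i xbar (p i) (y i) (q i) ≤
        (∑ i, f i (x i) (p i) (y i) (q i)) +
          Real.sqrt m * Mx * Real.sqrt (∑ i, ‖∑ j, Wx i j • x j‖ ^ 2) / lx := by
  intro p y q hp hy hq
  have hlpos : 0 < lx := hlx.1.1
  have hmR : (0 : ℝ) < m := by exact_mod_cast hm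
  have hxb : xbar ∈ Xb := by
    rw [hxbar, Finset.smul_sum]
    refine hXb.2.1.sum_mem (fun _ _ => by positivity) ?_ (fun i _ => hx i)
    simp [hmR.ne']
  have hlip : ∀ i, f i xbar (p i) (y i) (q i) ≤
      f i (x i) (p i) (y i) (q i) + Mx * ‖xbar - x i‖ := by
    intro i
    have hd : Differentiable ℝ (fun x' => f i x' (p i) (y i) (q i)) :=
      (hfdiff i).comp (g := fun t : (EuclideanSpace ℝ (Fin dx) × EuclideanSpace ℝ (Fin dp)) ×
          (EuclideanSpace ℝ (Fin dy) × EuclideanSpace ℝ (Fin dq)) =>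
        f i t.1.1 t.1.2 t.2.1 t.2.2) (f := fun x' => ((x', p i), (y i, q i))) (by fun_prop)
    have h := hXb.2.1.norm_image_sub_le_of_norm_fderiv_le (𝕜 := ℝ)
      (f := fun x' => f i x' (p i) (y i) (q i)) (C := Mx) (fun z _ => hd z)
      (fun z hz => by
        have := hgradx i z hz (p i) (hp i) (y i) (hy i) (q i) (hq i)
        rwa [gradient, LinearIsometryEquiv.norm_map] at this) (hx i) hxb
    have := (le_abs_self _).trans h
    linarith
  have hgap := sq_gap_le_euclidean hm hWxpsd hWxker hlpos
    (fun μ h1 h2 => hlx.2 ⟨h1, h2⟩) x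
  rw [← hxbar] at hgap
  have hcs : ∑ i, ‖xbar - x i‖ ≤ Real.sqrt m * Real.sqrt (∑ i, ‖xbar - x i‖ ^ 2) := by
    rw [← Real.sqrt_mul hmR.le]
    refine Real.le_sqrt_of_sq_le ?_
    simpa using sq_sum_le_card_mul_sum_sq (s := Finset.univ) (f := fun i => ‖xbar - x i‖)
  have hroot : Real.sqrt (∑ i, ‖xbar - x i‖ ^ 2) ≤
      Real.sqrt (∑ i, ‖∑ j, Wx i j • x j‖ ^ 2) / lx := by
    rw [le_div_iff₀ hlpos, mul_comm]
    have := Real.sqrt_le_sqrt hgap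
    rwa [Real.sqrt_mul (sq_nonneg _), Real.sqrt_sq hlpos.le] at this
  calc ∑ i, f i xbar (p i) (y i) (q i)
      ≤ ∑ i, (f i (x i) (p i) (y i) (q i) + Mx * ‖xbar - x i‖) :=
        Finset.sum_le_sum fun i _ => hlip i
    _ = (∑ i, f i (x i) (p i) (y i) (q i)) + Mx * ∑ i, ‖xbar - x i‖ := by
        rw [Finset.sum_add_distrib, Finset.mul_sum]
    _ ≤ (∑ i, f i (x i) (p i) (y i) (q i)) +
          Mx * (Real.sqrt m * (Real.sqrt (∑ i, ‖∑ j, Wx i j • x j‖ ^ 2) / lx)) := by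
        gcongr
        exact hcs.trans (by gcongr)
    _ = _ := by ring
end

section
/- Let n ≥ 1 and let p ∈ ℝ^{n×n} have nonnegative entries with Σ_{j,k} p_{jk} = 1. Let r ∈ ℝ^n and c ∈ ℝ^n denote its row sums r_j = Σ_k p_{jk} and column sums c_k = Σ_j p_{jk}. Then ‖r‖₂² + ‖c‖₂² ≤ 2. -/
/-- A probability vector has squared Euclidean norm at most one, since its entries lie in `[0, 1]`
and hence dominate their squares. -/
lemma sum_sq_le_one_of_sum_eq_one {n : ℕ} (v : Fin n → ℝ) (hv : ∀ j, 0 ≤ v j)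
    (hs : ∑ j, v j = 1) : ∑ j, (v j) ^ 2 ≤ 1 := by
  rw [← hs]
  refine Finset.sum_le_sum fun j _ => ?_
  have h1 : v j ≤ 1 := hs ▸ Finset.single_le_sum (fun i _ => hv i) (Finset.mem_univ j)
  nlinarith [hv j]

theorem stmt_8 (n : ℕ) (hn : 1 ≤ n) (p : Fin n → Fin n → ℝ)
    (hpos : ∀ j k, 0 ≤ p j k) (hsum : ∑ j, ∑ k, p j k = 1)
    (r c : Fin n → ℝ) (hr : ∀ j, r j = ∑ k, p j k) (hc : ∀ k, c k = ∑ j, p j k) :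
    (∑ j, (r j) ^ 2) + (∑ k, (c k) ^ 2) ≤ 2 := by
  have h1 : ∑ j, (r j) ^ 2 ≤ 1 := sum_sq_le_one_of_sum_eq_one r
    (fun j => hr j ▸ Finset.sum_nonneg fun k _ => hpos j k) (by simp only [hr, hsum])
  have h2 : ∑ k, (c k) ^ 2 ≤ 1 := sum_sq_le_one_of_sum_eq_one c
    (fun k => hc k ▸ Finset.sum_nonneg fun j _ => hpos j k)
    (by simp only [hc]; rw [Finset.sum_comm, hsum])
  linarith
end

section
/- Let d ≥ 1, α > 0, and q = (2 + α − √(α² + 4α))/2, the smaller root of q² − (2+α)q + 1 = 0. Let M ∈ ℝ^{d×d} be the tridiagonal matrix with M_{11} = 1 + α, M_{jj} = 2 + α for 2 ≤ j ≤ d, M_{j,j+1} = M_{j+1,j} = −1 for 1 ≤ j ≤ d−1, and all other entries zero. Then M is positive definite, and the unique solution y* of M y* = e_1 (where e_1 is the first standard basis vector) satisfies ‖ȳ − y*‖₂ ≤ q^{d+1} / (α(1 − q)), where ȳ ∈ ℝ^d is defined by ȳ_j = q^j / (1 − q) for j = 1,…,d. -/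
/-!
The quadratic form of `M` is `α ‖x‖² + ∑ (x_j - x_{j+1})²` (with `x_{d+1} = 0`), so it is bounded
below by `α ‖x‖²`; this gives positive definiteness. Because `q² - (2 + α) q + 1 = 0`, the vector
`ybar` satisfies every row of the system except the last, where the residual is
`c = q^(d+1) / (1 - q)`. Hence `w = ybar - ystar` satisfies `M w = c e_d`, and coercivity together
with `|w_d| ≤ ‖w‖` yields `α ‖w‖² ≤ ⟨w, M w⟩ = c w_d ≤ c ‖w‖`, i.e. `‖w‖ ≤ c / α`.
-/

/-- Extension of a finite vector to `ℕ` by zero. -/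
def extendZero {d : ℕ} (x : Fin d → ℝ) (n : ℕ) : ℝ := if h : n < d then x ⟨n, h⟩ else 0

/-- Row `n` of `M` applied to a sequence; the missing left neighbour of index `0` is reflected in
the diagonal entry `1 + α` in place of `2 + α`. -/
def rowOp (α : ℝ) (X : ℕ → ℝ) (n : ℕ) : ℝ :=
  α * X n + (X n - X (n + 1)) + (if n = 0 then 0 else X n - X (n - 1))

lemma extendZero_coe {d : ℕ} (x : Fin d → ℝ) (j : Fin d) : extendZero x j = x j := by
  simp [extendZero]

lemma extendZero_self {d : ℕ} (x : Fin d → ℝ) : extendZero x d = 0 := by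
  simp [extendZero]

lemma sum_ite_val_eq {d : ℕ} (x : Fin d → ℝ) (m : ℕ) :
    ∑ k : Fin d, (if (k : ℕ) = m then x k else 0) = extendZero x m := by
  unfold extendZero
  split_ifs with h
  · rw [Finset.sum_eq_single ⟨m, h⟩]
    · simp
    · intro b _ hb
      rw [if_neg]
      exact fun h' => hb (Fin.ext h')
    · simp
  · refine Finset.sum_eq_zero fun k _ => if_neg ?_
    have := k.2
    omega

lemma mulVec_eq_rowOp {d : ℕ} {α : ℝ} {M : Matrix (Fin d) (Fin d) ℝ}
    (hM : ∀ j k : Fin d, M j k =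
      if j = k then (if (j : ℕ) = 0 then 1 + α else 2 + α)
      else if (j : ℕ) + 1 = (k : ℕ) ∨ (k : ℕ) + 1 = (j : ℕ) then -1 else 0)
    (x : Fin d → ℝ) (j : Fin d) :
    M.mulVec x j = rowOp α (extendZero x) j := by
  have key : ∀ k : Fin d, M j k * x k =
      (if (j : ℕ) = 0 then 1 + α else 2 + α) * (if (k : ℕ) = (j : ℕ) then x k else 0)
      - (if (k : ℕ) = (j : ℕ) + 1 then x k else 0)
      - (if (j : ℕ) = 0 then 0 else (if (k : ℕ) = (j : ℕ) - 1 then x k else 0)) := by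
    intro k
    simp only [hM, Fin.ext_iff]
    split_ifs <;> first | omega | ring
  have hsum : ∑ k : Fin d,
      (if (j : ℕ) = 0 then 0 else (if (k : ℕ) = (j : ℕ) - 1 then x k else 0)) =
      if (j : ℕ) = 0 then 0 else extendZero x ((j : ℕ) - 1) := by
    split_ifs
    · simp
    · exact sum_ite_val_eq x _
  simp only [Matrix.mulVec, dotProduct, key, Finset.sum_sub_distrib, ← Finset.mul_sum,
    sum_ite_val_eq, hsum, rowOp]
  split_ifs <;> ring

/-- Summation by parts; the last summand is the boundary term at `n`. -/
lemma sum_mul_rowOp (α : ℝ) (X : ℕ → ℝ) (n : ℕ) :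
    ∑ j ∈ Finset.range n, X j * rowOp α X j =
      ∑ j ∈ Finset.range n, (α * X j ^ 2 + (X j - X (j + 1)) ^ 2)
        + (if n = 0 then 0 else X n * (X (n - 1) - X n)) := by
  induction n with
  | zero => simp
  | succ n ih =>
    rw [Finset.sum_range_succ, Finset.sum_range_succ, ih, rowOp]
    rcases n with _ | n
    · simp; ring
    · simp; ring

lemma coercive {d : ℕ} {α : ℝ} {M : Matrix (Fin d) (Fin d) ℝ}
    (hM : ∀ j k : Fin d, M j k =
      if j = k then (if (j : ℕ) = 0 then 1 + α else 2 + α)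
      else if (j : ℕ) + 1 = (k : ℕ) ∨ (k : ℕ) + 1 = (j : ℕ) then -1 else 0)
    (x : Fin d → ℝ) :
    α * ∑ j, x j ^ 2 ≤ ∑ j, x j * M.mulVec x j := by
  have h1 : ∑ j, x j * M.mulVec x j =
      ∑ j ∈ Finset.range d, extendZero x j * rowOp α (extendZero x) j := by
    rw [← Fin.sum_univ_eq_sum_range (fun j => extendZero x j * rowOp α (extendZero x) j)]
    simp only [mulVec_eq_rowOp hM, extendZero_coe]
  have h2 : ∑ j, x j ^ 2 = ∑ j ∈ Finset.range d, extendZero x j ^ 2 := by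
    rw [← Fin.sum_univ_eq_sum_range (fun j => extendZero x j ^ 2)]
    simp only [extendZero_coe]
  rw [h1, h2, sum_mul_rowOp, extendZero_self, zero_mul, ite_self, add_zero, Finset.mul_sum]
  exact Finset.sum_le_sum fun j _ => le_add_of_nonneg_right (sq_nonneg _)

/-- `ybar` solves every row of the system but the last one. -/
lemma rowOp_ybar {d : ℕ} {α q : ℝ} (hq1 : q < 1) (hroot : q ^ 2 - (2 + α) * q + 1 = 0)
    {ybar : Fin d → ℝ} (hybar : ∀ j, ybar j = q ^ ((j : ℕ) + 1) / (1 - q)) (j : Fin d) :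
    rowOp α (extendZero ybar) j = (if (j : ℕ) = 0 then (1 : ℝ) else 0)
      + (if (j : ℕ) + 1 = d then q ^ (d + 1) / (1 - q) else 0) := by
  have hne : 1 - q ≠ 0 := by linarith
  have hval : ∀ n, n < d → extendZero ybar n = q ^ (n + 1) / (1 - q) := fun n hn => by
    simp [extendZero, hn, hybar]
  have hj := j.2
  -- The zero at index `d` differs from the geometric value there by exactly the residual.
  have hnext : extendZero ybar ((j : ℕ) + 1) = q ^ ((j : ℕ) + 2) / (1 - q)
      - (if (j : ℕ) + 1 = d then q ^ (d + 1) / (1 - q) else 0) := by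
    split_ifs with h
    · rw [show (j : ℕ) + 2 = d + 1 by omega, h, extendZero_self, sub_self]
    · rw [hval _ (by omega)]; ring
  rw [rowOp, hnext, hval _ hj]
  by_cases h0 : (j : ℕ) = 0
  · simp only [h0, if_true]
    have : α * (q ^ (0 + 1) / (1 - q)) + (q ^ (0 + 1) / (1 - q) - q ^ (0 + 2) / (1 - q)) = 1 := by
      field_simp
      linear_combination -hroot
    linear_combination this
  · obtain ⟨m, hm⟩ := Nat.exists_eq_succ_of_ne_zero h0
    rw [if_neg h0, if_neg h0, hval _ (by omega)]
    simp only [hm, Nat.succ_eq_add_one, Nat.add_sub_cancel]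
    have : α * (q ^ (m + 1 + 1) / (1 - q))
        + (q ^ (m + 1 + 1) / (1 - q) - q ^ (m + 1 + 2) / (1 - q))
        + (q ^ (m + 1 + 1) / (1 - q) - q ^ (m + 1) / (1 - q)) = 0 := by
      field_simp
      linear_combination -q ^ (m + 1) * hroot
    linear_combination this

theorem stmt_11 (d : ℕ) (hd : 1 ≤ d) (α : ℝ) (hα : 0 < α)
    (q : ℝ) (hq : q = (2 + α - Real.sqrt (α ^ 2 + 4 * α)) / 2)
    (M : Matrix (Fin d) (Fin d) ℝ)
    (hM : ∀ j k : Fin d, M j k =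
      if j = k then (if (j : ℕ) = 0 then 1 + α else 2 + α)
      else if (j : ℕ) + 1 = (k : ℕ) ∨ (k : ℕ) + 1 = (j : ℕ) then -1 else 0)
    (ybar : Fin d → ℝ) (hybar : ∀ j, ybar j = q ^ ((j : ℕ) + 1) / (1 - q)) :
    M.PosDef ∧ ∀ ystar : Fin d → ℝ,
      M.mulVec ystar = (fun j : Fin d => if (j : ℕ) = 0 then (1 : ℝ) else 0) →
      Real.sqrt (∑ j, (ybar j - ystar j) ^ 2) ≤ q ^ (d + 1) / (α * (1 - q)) := by
  have hs : Real.sqrt (α ^ 2 + 4 * α) ^ 2 = α ^ 2 + 4 * α := Real.sq_sqrt (by positivity)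
  have hs0 := Real.sqrt_nonneg (α ^ 2 + 4 * α)
  have hroot : q ^ 2 - (2 + α) * q + 1 = 0 := by
    rw [hq]; linear_combination hs / 4
  have hq1 : q < 1 := by
    have : α < Real.sqrt (α ^ 2 + 4 * α) := Real.lt_sqrt_of_sq_lt (by linarith)
    rw [hq]; linarith
  have hq0 : 0 < q := by nlinarith [sq_nonneg q]
  refine ⟨Matrix.PosDef.of_dotProduct_mulVec_pos ?_ ?_, ?_⟩
  · ext j k
    simp only [Matrix.conjTranspose_apply, star_trivial, hM, Fin.ext_iff]
    split_ifs <;> first | rfl | omega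
  · intro x hx
    obtain ⟨i, hi⟩ := Function.ne_iff.mp hx
    have hpos : 0 < ∑ j, x j ^ 2 :=
      Finset.sum_pos' (fun j _ => sq_nonneg _) ⟨i, Finset.mem_univ _, by
        have : x i ≠ 0 := hi
        positivity⟩
    simpa [dotProduct] using (mul_pos hα hpos).trans_le (coercive hM x)
  · intro ystar hy
    set c := q ^ (d + 1) / (1 - q) with hc
    have hc0 : 0 ≤ c := div_nonneg (by positivity) (by linarith)
    set w : Fin d → ℝ := ybar - ystar with hw
    let l : Fin d := ⟨d - 1, by omega⟩
    have hMw : ∀ j : Fin d, M.mulVec w j = if j = l then c else 0 := by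
      intro j
      rw [hw, Matrix.mulVec_sub, Pi.sub_apply, hy, mulVec_eq_rowOp hM, rowOp_ybar hq1 hroot hybar]
      have : (j : ℕ) + 1 = d ↔ j = l := by
        rw [Fin.ext_iff]; show _ ↔ (j : ℕ) = d - 1; omega
      simp only [this]
      ring
    have hco := coercive hM w
    simp only [hMw, mul_ite, mul_zero, Finset.sum_ite_eq', Finset.mem_univ, if_true] at hco
    have hS : ∑ j, (ybar j - ystar j) ^ 2 = ∑ j, w j ^ 2 := rfl
    rw [hS]
    set S := ∑ j, w j ^ 2 with hSdef
    have hS0 : 0 ≤ S := Finset.sum_nonneg fun j _ => sq_nonneg _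
    have hwl : w l ≤ Real.sqrt S := Real.le_sqrt_of_sq_le
      (Finset.single_le_sum (f := fun j => w j ^ 2) (fun j _ => sq_nonneg _) (Finset.mem_univ l))
    have hgoal : q ^ (d + 1) / (α * (1 - q)) = c / α := by
      rw [hc, div_div, mul_comm]
    rw [hgoal, le_div_iff₀ hα]
    have hss := Real.sq_sqrt hS0
    rcases (Real.sqrt_nonneg S).eq_or_lt with h | h
    · rw [← h]; simpa using hc0
    · have : Real.sqrt S * (Real.sqrt S * α) ≤ Real.sqrt S * c := by
        nlinarith [mul_le_mul_of_nonneg_right hwl hc0]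
      exact le_of_mul_le_mul_left this h
end

section
/- Let d ≥ 2, q ∈ (0,1), and ȳ ∈ ℝ^d with ȳ_j = q^j/(1−q) for j = 1,…,d. Let k be an integer with 1 ≤ k ≤ d/2. Then for every y ∈ ℝ^d with y_j = 0 for all j > k, one has ‖y − ȳ‖₂ ≥ (q^k / √2) ‖ȳ‖₂. -/
/-! Since `y` vanishes beyond index `k`, the squared distance is at least the tail
`T = ∑_{j > k} ȳ_j²`. Let `A = ∑_{j ≤ k} ȳ_j²` be the head. As `ȳ_{k+j} = q^k ȳ_j` and `2k ≤ d`, the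
tail contains a copy of the head scaled by `q^(2k)`, so `T ≥ q^(2k) A`; also `T ≥ q^(2k) T` because
`q < 1`. Averaging the two bounds gives `T ≥ (q^(2k) / 2) (A + T) = (q^k / √2)² ‖ȳ‖₂²`. -/

theorem stmt_12 (d : ℕ) (hd : 2 ≤ d) (q : ℝ) (hq : q ∈ Set.Ioo (0:ℝ) 1)
    (ybar : Fin d → ℝ) (hybar : ∀ j, ybar j = q ^ ((j : ℕ) + 1) / (1 - q))
    (k : ℕ) (hk1 : 1 ≤ k) (hk2 : (k : ℝ) ≤ (d : ℝ) / 2)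
    (y : Fin d → ℝ) (hy : ∀ j : Fin d, k < (j : ℕ) + 1 → y j = 0) :
    Real.sqrt (∑ j, (y j - ybar j) ^ 2) ≥
      (q ^ k / Real.sqrt 2) * Real.sqrt (∑ j, (ybar j) ^ 2) := by
  obtain ⟨hq0, hq1⟩ := hq
  have hkd : k + k ≤ d := by
    have : ((k + k : ℕ) : ℝ) ≤ d := by push_cast; linarith
    exact_mod_cast this
  obtain ⟨n, rfl⟩ := Nat.exists_eq_add_of_le hkd
  set f : ℕ → ℝ := fun j => (q ^ (j + 1) / (1 - q)) ^ 2 with hf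
  have hf0 : ∀ j, 0 ≤ f j := fun j => sq_nonneg _
  have hshift : ∀ j, f (k + j) = (q ^ k) ^ 2 * f j := by
    intro j
    simp only [hf]
    ring
  have hsplit : ∀ g : ℕ → ℝ, ∑ j : Fin (k + k + n), g j
      = ∑ j ∈ Finset.range k, g j + ∑ j ∈ Finset.range (k + n), g (k + j) := by
    intro g
    rw [Fin.sum_univ_eq_sum_range, add_assoc, Finset.sum_range_add]
  have hnorm : ∑ j, (ybar j) ^ 2
      = ∑ j ∈ Finset.range k, f j + ∑ j ∈ Finset.range (k + n), f (k + j) := by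
    rw [← hsplit]
    exact Finset.sum_congr rfl fun j _ => by rw [hybar]
  have htail : ∑ j ∈ Finset.range (k + n), f (k + j) ≤ ∑ j, (y j - ybar j) ^ 2 := by
    calc ∑ j ∈ Finset.range (k + n), f (k + j)
        = ∑ j : Fin (k + k + n), (if k ≤ (j : ℕ) then f j else 0) := by
          rw [hsplit (fun j => if k ≤ j then f j else 0),
            Finset.sum_eq_zero (s := Finset.range k)]
          · simp
          · intro j hj
            exact if_neg (not_le.mpr (Finset.mem_range.mp hj))
      _ ≤ _ := by
          refine Finset.sum_le_sum fun j _ => ?_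
          split_ifs with h
          · rw [hy j (by omega), hybar, zero_sub, neg_sq]
          · positivity
  have hhead : (q ^ k) ^ 2 * ∑ j ∈ Finset.range k, f j
      ≤ ∑ j ∈ Finset.range (k + n), f (k + j) := by
    rw [Finset.mul_sum, Finset.sum_range_add]
    simp only [hshift]
    have : 0 ≤ ∑ j ∈ Finset.range n, (q ^ k) ^ 2 * f (k + j) :=
      Finset.sum_nonneg fun j _ => mul_nonneg (sq_nonneg _) (hf0 _)
    simp only [hshift] at this
    linarith
  have hT0 : 0 ≤ ∑ j ∈ Finset.range (k + n), f (k + j) := Finset.sum_nonneg fun j _ => hf0 _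
  have hc : (q ^ k) ^ 2 ≤ 1 := pow_le_one₀ (by positivity) (pow_le_one₀ hq0.le hq1.le)
  apply Real.le_sqrt_of_sq_le
  have hS0 : 0 ≤ ∑ j, (ybar j) ^ 2 := Finset.sum_nonneg fun j _ => sq_nonneg _
  rw [mul_pow, div_pow, Real.sq_sqrt hS0, Real.sq_sqrt (by norm_num), hnorm]
  have := mul_le_mul_of_nonneg_right hc hT0
  linarith
end

section
/- Let X ⊆ ℝ^{d_1} and Y ⊆ ℝ^{d_2} be convex sets, μ > 0, and f : X × Y → ℝ a function such that for every y ∈ Y the function f(·, y) is μ-strongly convex on X and for every x ∈ X the function f(x, ·) is μ-strongly concave on Y. Let (x*, y*) ∈ X × Y be a saddle point of f, i.e. f(x*, y) ≤ f(x*, y*) ≤ f(x, y*) for all x ∈ X, y ∈ Y. Then for every (x, y) ∈ X × Y: sup_{y'∈Y} f(x, y') − inf_{x'∈X} f(x', y) ≥ (μ/2)(‖x − x*‖₂² + ‖y − y*‖₂²). -/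
/-!
For `x` and `y` fixed, the values `f x y'` are bounded above on `Y` and the values `f x' y` are
bounded below on `X`, so the supremum is at least `f x y*` and the infimum at most `f x* y`. The
gap is therefore at least `(f x y* - f x* y*) + (f x* y* - f x* y)`, and each bracket is bounded
below by quadratic growth of a strongly convex function away from its minimizer
(`quadratic_growth`).

The boundedness (`bddBelow_of_strong`) uses finite dimension: a convex function is
continuous, hence bounded above on a small relative ball around a point `c` of the relative interior.
For `y` in the set, the point `c` lies between `y` and the point of that ball opposite to `y`, so
strong convexity bounds the value at `y` from below by an affine function of `‖y - c‖` plus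
`μ / 2 * ‖y - c‖ ^ 2`, which is bounded below.
-/

lemma quadratic_growth {E : Type*} [NormedAddCommGroup E] [NormedSpace ℝ E]
    {X : Set E} (hX : Convex ℝ X) {μ : ℝ} {h : E → ℝ}
    (hconv : ∀ x ∈ X, ∀ x' ∈ X, ∀ t ∈ Set.Icc (0 : ℝ) 1,
      h (t • x + (1 - t) • x') ≤ t * h x + (1 - t) * h x' - μ / 2 * (t * (1 - t)) * ‖x - x'‖ ^ 2)
    {a : E} (ha : a ∈ X) (hmin : ∀ x ∈ X, h a ≤ h x) {x : E} (hx : x ∈ X) :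
    h a + μ / 2 * ‖x - a‖ ^ 2 ≤ h x := by
  have key : ∀ t ∈ Set.Ioo (0 : ℝ) 1, h a + μ / 2 * (1 - t) * ‖x - a‖ ^ 2 ≤ h x := by
    rintro t ⟨ht0, ht1⟩
    have h1 := hconv x hx a ha t ⟨ht0.le, ht1.le⟩
    have h2 := hmin _ (hX hx ha ht0.le (sub_nonneg.2 ht1.le) (by ring))
    have h3 : t * (h a + μ / 2 * (1 - t) * ‖x - a‖ ^ 2) ≤ t * h x := by linarith
    exact le_of_mul_le_mul_left h3 ht0
  -- Let `t` tend to `0` from the right.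
  have hlim : Filter.Tendsto (fun t : ℝ => h a + μ / 2 * (1 - t) * ‖x - a‖ ^ 2)
      (nhdsWithin 0 (Set.Ioi 0)) (nhds (h a + μ / 2 * ‖x - a‖ ^ 2)) := by
    have hc : Continuous (fun t : ℝ => h a + μ / 2 * (1 - t) * ‖x - a‖ ^ 2) := by fun_prop
    have := (hc.tendsto 0).mono_left (nhdsWithin_le_nhds (s := Set.Ioi 0))
    simpa using this
  refine le_of_tendsto hlim ?_
  filter_upwards [Ioo_mem_nhdsGT (zero_lt_one' ℝ)] with t ht using key t ht

/-- A convex function on a nonempty convex set `X` of a finite-dimensional space is bounded above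
on a relative ball around some point `c` of `X`. -/
lemma exists_relative_ball {E : Type*} [NormedAddCommGroup E] [NormedSpace ℝ E]
    [FiniteDimensional ℝ E] {X : Set E} (hX : Convex ℝ X) (hne : X.Nonempty) {h : E → ℝ}
    (hconv : ConvexOn ℝ X h) :
    ∃ c ∈ X, ∃ r > 0, ∀ v ∈ (affineSpan ℝ X).direction, ‖v‖ ≤ r →
      v + c ∈ X ∧ h (v + c) ≤ h c + 1 := by
  obtain ⟨c, hc⟩ := hne.intrinsicInterior hX
  have hcX : c ∈ X := intrinsicInterior_subset hc
  have hcA : c ∈ affineSpan ℝ X := subset_affineSpan ℝ X hcX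
  let φ : (affineSpan ℝ X).direction →ᵃ[ℝ] E :=
    (affineSpan ℝ X).direction.subtype.toAffineMap + AffineMap.const ℝ _ c
  have hφ : ∀ v, φ v = (v : E) + c := fun v => rfl
  have h0 : (0 : (affineSpan ℝ X).direction) ∈ interior (φ ⁻¹' X) := by
    obtain ⟨z, hz, rfl⟩ := hc
    rw [mem_interior_iff_mem_nhds] at hz ⊢
    have hψ : Continuous (fun v : (affineSpan ℝ X).direction =>
        (⟨(v : E) + z, AffineSubspace.vadd_mem_of_mem_direction v.2 z.2⟩ : affineSpan ℝ X)) := by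
      fun_prop
    have := hψ.tendsto 0
    have e : (⟨((0 : (affineSpan ℝ X).direction) : E) + z,
      AffineSubspace.vadd_mem_of_mem_direction (Submodule.zero_mem _) z.2⟩ : affineSpan ℝ X) = z :=
      Subtype.ext (by simp)
    rw [e] at this
    exact this hz
  have hcont := (hconv.comp_affineMap φ).continuousOn_interior
  have hev := (hcont.continuousAt (isOpen_interior.mem_nhds h0)).eventually_lt
    (continuousAt_const (y := h c + 1)) (by simp [hφ])
  obtain ⟨ε, hε, hb⟩ := Metric.mem_nhds_iff.1
    (Filter.inter_mem hev (mem_interior_iff_mem_nhds.1 h0))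
  refine ⟨c, hcX, ε / 2, half_pos hε, fun v hv hvr => ?_⟩
  have := @hb ⟨v, hv⟩ (by
    rw [mem_ball_zero_iff]
    exact lt_of_le_of_lt hvr (half_lt_self hε))
  exact ⟨this.2, le_of_lt this.1⟩

lemma bddBelow_of_strong {E : Type*} [NormedAddCommGroup E] [NormedSpace ℝ E]
    [FiniteDimensional ℝ E] {X : Set E} (hX : Convex ℝ X) {μ : ℝ} (hμ : 0 < μ) {h : E → ℝ}
    (hconv : ∀ x ∈ X, ∀ x' ∈ X, ∀ t ∈ Set.Icc (0 : ℝ) 1,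
      h (t • x + (1 - t) • x') ≤ t * h x + (1 - t) * h x' - μ / 2 * (t * (1 - t)) * ‖x - x'‖ ^ 2) :
    BddBelow (h '' X) := by
  rcases X.eq_empty_or_nonempty with rfl | hne
  · simp
  have hcv : ConvexOn ℝ X h := by
    refine ⟨hX, fun x hx y hy a b ha hb hab => ?_⟩
    obtain rfl : b = 1 - a := by linarith
    have := hconv x hx y hy a ⟨ha, by linarith⟩
    have : 0 ≤ μ / 2 * (a * (1 - a)) * ‖x - y‖ ^ 2 := by positivity
    simp only [smul_eq_mul]
    linarith
  obtain ⟨c, hc, r, hr, hball⟩ := exists_relative_ball hX hne hcv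
  -- The bound is the minimum over `D` of `h c - D / r + μ / 2 * D ^ 2`.
  refine ⟨h c - 1 / (2 * μ * r ^ 2), ?_⟩
  rintro _ ⟨y, hy, rfl⟩
  rcases eq_or_ne y c with rfl | hyc
  · have : 0 ≤ 1 / (2 * μ * r ^ 2) := by positivity
    linarith
  have hD : 0 < ‖y - c‖ := norm_pos_iff.2 (sub_ne_zero.2 hyc)
  set D := ‖y - c‖ with hDdef
  have hdir : y - c ∈ (affineSpan ℝ X).direction :=
    AffineSubspace.vsub_mem_direction (subset_affineSpan ℝ X hy) (subset_affineSpan ℝ X hc)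
  -- The point of the ball opposite to `y`, at distance `r` from `c`.
  obtain ⟨hzX, hzh⟩ := hball (-(r / D) • (y - c)) (Submodule.smul_mem _ _ hdir) (by
    rw [norm_smul, ← hDdef, norm_neg, Real.norm_of_nonneg (by positivity)]
    field_simp; exact le_refl _)
  set z := -(r / D) • (y - c) + c with hz
  have hs := hconv y hy z hzX (r / (r + D)) ⟨by positivity, by
    rw [div_le_one (by positivity)]; linarith⟩
  have hyz : y - z = ((r + D) / D) • (y - c) := by
    rw [hz, add_div, div_self hD.ne']; module
  have hcomb : (r / (r + D)) • y + (1 - r / (r + D)) • z = c := by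
    calc (r / (r + D)) • y + (1 - r / (r + D)) • z
        = z + (r / (r + D)) • (y - z) := by module
      _ = z + (r / D) • (y - c) := by
          rw [hyz, smul_smul]; congr 2; field_simp
      _ = c := by rw [hz]; module
  have hn : ‖y - z‖ = r + D := by
    rw [hyz, norm_smul, ← hDdef, Real.norm_of_nonneg (by positivity)]; field_simp
  rw [hcomb, hn] at hs
  have e1 : 1 - r / (r + D) = D / (r + D) := by field_simp; ring
  have e2 : μ / 2 * (r / (r + D) * (D / (r + D))) * (r + D) ^ 2 = μ / 2 * (r * D) := by
    field_simp
  rw [e1, e2] at hs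
  have h3 : (r + D) * h c ≤ r * h y + D * h z - μ / 2 * (r * D) * (r + D) := by
    have := mul_le_mul_of_nonneg_left hs (show 0 ≤ r + D by positivity)
    have e3 : (r + D) * (r / (r + D) * h y + D / (r + D) * h z - μ / 2 * (r * D))
      = r * h y + D * h z - μ / 2 * (r * D) * (r + D) := by field_simp
    linarith
  have h4 : r * (h c - D / r + μ / 2 * D ^ 2) ≤ r * h y := by
    have e4 : r * (h c - D / r + μ / 2 * D ^ 2) = r * h c - D + μ / 2 * r * D ^ 2 := by
      field_simp
    have h5 := mul_le_mul_of_nonneg_left hzh hD.le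
    have h6 : 0 ≤ μ / 2 * r ^ 2 * D := by positivity
    rw [e4]
    nlinarith
  have h7 := le_of_mul_le_mul_left h4 hr
  have h8 : 0 ≤ μ / 2 * (D - 1 / (μ * r)) ^ 2 := by positivity
  have h9 : μ / 2 * (D - 1 / (μ * r)) ^ 2 = μ / 2 * D ^ 2 - D / r + 1 / (2 * μ * r ^ 2) := by
    field_simp; ring
  linarith


theorem stmt_14 (d₁ d₂ : ℕ)
    (X : Set (EuclideanSpace ℝ (Fin d₁))) (Y : Set (EuclideanSpace ℝ (Fin d₂)))
    (hX : Convex ℝ X) (hY : Convex ℝ Y)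
    (μ : ℝ) (hμ : 0 < μ)
    (f : EuclideanSpace ℝ (Fin d₁) → EuclideanSpace ℝ (Fin d₂) → ℝ)
    (hconv : ∀ y ∈ Y, ∀ x ∈ X, ∀ x' ∈ X, ∀ t ∈ Set.Icc (0:ℝ) 1,
      f (t • x + (1 - t) • x') y ≤
        t * f x y + (1 - t) * f x' y - μ / 2 * (t * (1 - t)) * ‖x - x'‖ ^ 2)
    (hconc : ∀ x ∈ X, ∀ y ∈ Y, ∀ y' ∈ Y, ∀ t ∈ Set.Icc (0:ℝ) 1,
      f x (t • y + (1 - t) • y') ≥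
        t * f x y + (1 - t) * f x y' + μ / 2 * (t * (1 - t)) * ‖y - y'‖ ^ 2)
    (xstar : EuclideanSpace ℝ (Fin d₁)) (ystar : EuclideanSpace ℝ (Fin d₂))
    (hxs : xstar ∈ X) (hys : ystar ∈ Y)
    (hsaddle : ∀ x ∈ X, ∀ y ∈ Y, f xstar y ≤ f xstar ystar ∧ f xstar ystar ≤ f x ystar) :
    ∀ x ∈ X, ∀ y ∈ Y,
      sSup ((fun y' => f x y') '' Y) - sInf ((fun x' => f x' y) '' X) ≥
        μ / 2 * (‖x - xstar‖ ^ 2 + ‖y - ystar‖ ^ 2) := by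
  intro x hx y hy
  have hneg : ∀ x ∈ X, ∀ y ∈ Y, ∀ y' ∈ Y, ∀ t ∈ Set.Icc (0 : ℝ) 1,
      -f x (t • y + (1 - t) • y') ≤
        t * -f x y + (1 - t) * -f x y' - μ / 2 * (t * (1 - t)) * ‖y - y'‖ ^ 2 := by
    intro x hx y hy y' hy' t ht
    linarith [hconc x hx y hy y' hy' t ht]
  have h1 := quadratic_growth hX (h := fun x => f x ystar) (hconv ystar hys) hxs
    (fun x hx => (hsaddle x hx ystar hys).2) hx
  have h2 := quadratic_growth hY (h := fun y => -f xstar y) (hneg xstar hxs) hys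
    (fun y hy => neg_le_neg (hsaddle xstar hxs y hy).1) hy
  have hbX := bddBelow_of_strong hX hμ (h := fun x => f x y) (hconv y hy)
  have hbY : BddAbove ((fun y' => f x y') '' Y) := by
    obtain ⟨m, hm⟩ := bddBelow_of_strong hY hμ (h := fun y => -f x y) (hneg x hx)
    refine ⟨-m, ?_⟩
    rintro _ ⟨y', hy', rfl⟩
    have := hm ⟨y', hy', rfl⟩
    simp only at this ⊢
    linarith
  have h3 : f x ystar ≤ sSup ((fun y' => f x y') '' Y) := le_csSup hbY ⟨ystar, hys, rfl⟩
  have h4 : sInf ((fun x' => f x' y) '' X) ≤ f xstar y := csInf_le hbX ⟨xstar, hxs, rfl⟩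
  linarith
end

section
/- Let Q ⊆ ℝ^d be a nonempty closed convex set, A, B : Q → ℝ^d monotone and Lipschitz with constants L_A and L_B respectively, g = A + B μ-strongly monotone with μ > 0, and ζ* ∈ Q with ⟨g(ζ*), ξ − ζ*⟩ ≥ 0 for all ξ ∈ Q. Let η > 0 satisfy η ≤ min{1/(2L_A), 1/(6μ)}, and let δ ∈ (0, 1/4] satisfy δ ≤ (64/(ημ) + 64ηL_B²/μ)^{-1}. Fix ζ ∈ Q and set ν = ζ − η A(ζ). Let θ̂ ∈ Q satisfy ⟨η B(θ̂) + θ̂ − ν, ξ − θ̂⟩ ≥ 0 for all ξ ∈ Q, and let θ ∈ Q satisfy ‖θ − θ̂‖₂² ≤ 4δ‖ζ − θ‖₂². Set ω = θ + η(A(ζ) − A(θ)) and let ζ⁺ be the metric projection of ω onto Q. Then ‖ζ⁺ − ζ*‖₂² ≤ (1 − ημ)‖ζ − ζ*‖₂². -/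
open RealInnerProductSpace

/-!
Write `m = η μ`, `v = θhat - ζstar`, `s = ζ - θhat`, `a = η (A ζ - A θhat)` and
`f = (θ - θhat) - η (A θ - A θhat)`, so that `ω - ζstar = v + a + f` and `ζ - ζstar = v + s`.

* The projection is nonexpansive towards points of `Q`, so it suffices to bound `‖v + a + f‖`.
* The two variational inequalities and strong monotonicity give `⟪a, v⟫ ≤ ⟪s, v⟫ - m ‖v‖²`.
* The Lipschitz bound and `η LA ≤ 1/2` give `‖a‖ ≤ ‖s‖ / 2`, hence also `⟪a, v⟫ ≤ ‖v‖ ‖s‖ / 2`.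
* Monotonicity of `A` sharpens the Lipschitz bound on `f` to `‖f‖² ≤ (5/4) ‖θ - θhat‖²`, and
  `δ ≤ m / 64` makes `‖f‖` at most `0.312 √m ‖s‖`.

Averaging the two bounds on `⟪a, v⟫` with weights `1 - m` and `m` makes the `⟪s, v⟫` terms match
those of `(1 - m) ‖v + s‖²`; what remains is a positive definite quadratic form in
`(√m ‖v‖, ‖s‖)`, by `m ≤ 1/6`.
-/

section Helpers

variable {E : Type*} [NormedAddCommGroup E] [InnerProductSpace ℝ E]

lemma norm_nearest_sub_le {Q : Set E} (hQ : Convex ℝ Q) {w p z : E} (hp : p ∈ Q) (hz : z ∈ Q)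
    (h : ∀ ξ ∈ Q, ‖p - w‖ ≤ ‖ξ - w‖) : ‖p - z‖ ≤ ‖w - z‖ := by
  have hinf : ‖w - p‖ = ⨅ x : Q, ‖w - x‖ := by
    have : Nonempty Q := ⟨⟨p, hp⟩⟩
    refine le_antisymm (le_ciInf fun x => ?_) ?_
    · rw [norm_sub_rev w p, norm_sub_rev w x]
      exact h x x.2
    · exact ciInf_le (f := fun x : Q => ‖w - x‖)
        ⟨0, by rintro _ ⟨x, rfl⟩; exact norm_nonneg _⟩ ⟨p, hp⟩
  have hang := (norm_eq_iInf_iff_real_inner_le_zero hQ hp).1 hinf z hz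
  have hsplit : w - z = (w - p) - (z - p) := by abel
  have hexp := norm_sub_sq_real (w - p) (z - p)
  rw [← hsplit] at hexp
  rw [norm_sub_rev p z]
  refine le_of_sq_le_sq ?_ (norm_nonneg _)
  nlinarith [sq_nonneg ‖w - p‖]

/-- The perturbation `e - b` is controlled better than by the triangle inequality when
`⟪b, e⟫ ≥ 0`; here `e = θ - θhat` and `b = η (A θ - A θhat)`. -/
lemma norm_sub_sq_le_of_inner_nonneg {e b : E} (hb : ‖b‖ ≤ ‖e‖ / 2) (h : 0 ≤ ⟪b, e⟫) :
    ‖e - b‖ ^ 2 ≤ 5 / 4 * ‖e‖ ^ 2 := by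
  have := norm_sub_sq_real e b
  rw [real_inner_comm] at this
  nlinarith [norm_nonneg b, norm_nonneg e]

/-- From an error relative to `S₀ ≤ S + E` to an error relative to `S`; the constant comes from
`√(5/4) · (1/4) / (1 - k/4) < 0.312`, using `k ≤ 1/√6`. -/
lemma error_le {k S S₀ E F : ℝ} (hk : 0 ≤ k) (hk6 : k ^ 2 ≤ 1 / 6) (hS : 0 ≤ S) (hE : 0 ≤ E)
    (hS₀ : 0 ≤ S₀) (hES : E ^ 2 ≤ k ^ 2 / 16 * S₀ ^ 2) (hSS : S₀ ≤ S + E)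
    (hF : F ^ 2 ≤ 5 / 4 * E ^ 2) : F ≤ 0.312 * (k * S) := by
  have hk' : k ≤ 0.4083 := by nlinarith
  have h1 : E ≤ k / 4 * S₀ := by
    refine le_of_sq_le_sq ?_ (by positivity)
    linarith [show (k / 4 * S₀) ^ 2 = k ^ 2 / 16 * S₀ ^ 2 by ring]
  have h2 : E ≤ 0.279 * (k * S) := by
    nlinarith [mul_le_mul_of_nonneg_left hSS hk, mul_nonneg hE (sub_nonneg.2 hk'),
      mul_nonneg hk hS]
  have h3 : F ≤ 1.1181 * E := by
    refine le_of_sq_le_sq ?_ (by positivity)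
    nlinarith [sq_nonneg E]
  nlinarith [mul_nonneg hk hS]

lemma quadratic_form_bound {k V S F : ℝ} (hk : 0 ≤ k) (hk6 : k ^ 2 ≤ 1 / 6) (hV : 0 ≤ V)
    (hS : 0 ≤ S) (hF0 : 0 ≤ F) (hF : F ≤ 0.312 * (k * S)) :
    k ^ 2 * V * S + 2 * F * V + F * S + F ^ 2
      ≤ k ^ 2 * (1 - 2 * k ^ 2) * V ^ 2 + (3 / 4 - k ^ 2) * S ^ 2 := by
  have hk' : k ≤ 0.4083 := by nlinarith
  have hW : 0 ≤ k * V := by positivity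
  have h1 : F * V ≤ 0.312 * ((k * V) * S) := by nlinarith [mul_le_mul_of_nonneg_right hF hV]
  have h2 : F ≤ 0.1274 * S := by nlinarith [mul_le_mul_of_nonneg_right hk' hS]
  have h3 : F * S ≤ 0.1274 * S ^ 2 := by nlinarith [mul_le_mul_of_nonneg_right h2 hS]
  have h4 : F ^ 2 ≤ 0.0163 * S ^ 2 := by nlinarith
  have h5 : k ^ 2 * V * S ≤ 0.4083 * ((k * V) * S) := by
    nlinarith [mul_le_mul_of_nonneg_right hk' (mul_nonneg hW hS)]
  have h6 : 2 / 3 * (k * V) ^ 2 ≤ k ^ 2 * (1 - 2 * k ^ 2) * V ^ 2 := by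
    nlinarith [mul_nonneg (sub_nonneg.2 hk6) (sq_nonneg (k * V))]
  have h7 : k ^ 2 * S ^ 2 ≤ 1 / 6 * S ^ 2 := mul_le_mul_of_nonneg_right hk6 (sq_nonneg S)
  have h8 : 1.0323 * ((k * V) * S) ≤ 2 / 3 * (k * V) ^ 2 + 0.4396 * S ^ 2 := by
    nlinarith [sq_nonneg (k * V - 0.8 * S), sq_nonneg S]
  linarith [sq_nonneg S]

/-- The contraction estimate for vectors: `v + s` is the old error, `v + a + f` the new one. -/
lemma contraction_core {v s a f : E} {k : ℝ} (hk : 0 ≤ k) (hk6 : k ^ 2 ≤ 1 / 6)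
    (ha : ‖a‖ ≤ ‖s‖ / 2) (hav : ⟪a, v⟫ ≤ ⟪s, v⟫ - k ^ 2 * ‖v‖ ^ 2)
    (hf : ‖f‖ ≤ 0.312 * (k * ‖s‖)) :
    ‖v + a + f‖ ^ 2 ≤ (1 - k ^ 2) * ‖v + s‖ ^ 2 := by
  have hV := norm_nonneg v
  have hS := norm_nonneg s
  have hF := norm_nonneg f
  have hA := norm_nonneg a
  have hq := quadratic_form_bound hk hk6 hV hS hF hf
  have e1 := norm_add_sq_real v a
  have e2 := norm_add_sq_real v s
  have e3 := norm_add_sq_real (v + a) f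
  rw [real_inner_comm] at e1 e2
  have hav2 : ⟪a, v⟫ ≤ ‖v‖ * ‖s‖ / 2 := by
    nlinarith [real_inner_le_norm a v, mul_le_mul_of_nonneg_right ha hV]
  have hfv : ⟪v + a, f⟫ ≤ (‖v‖ + ‖s‖ / 2) * ‖f‖ :=
    (real_inner_le_norm _ _).trans
      (mul_le_mul_of_nonneg_right ((norm_add_le v a).trans (by linarith)) hF)
  have ha2 : ‖a‖ ^ 2 ≤ ‖s‖ ^ 2 / 4 := by nlinarith
  -- The average with weights `1 - m` and `m` of the two upper bounds for `⟪a, v⟫`.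
  have havg : ⟪a, v⟫ ≤ (1 - k ^ 2) * (⟪s, v⟫ - k ^ 2 * ‖v‖ ^ 2) + k ^ 2 * (‖v‖ * ‖s‖ / 2) := by
    nlinarith [mul_le_mul_of_nonneg_left hav (show 0 ≤ 1 - k ^ 2 by linarith),
      mul_le_mul_of_nonneg_left hav2 (sq_nonneg k)]
  rw [e3, e1, e2]
  linarith

end Helpers

theorem stmt_17 (d : ℕ) (Q : Set (EuclideanSpace ℝ (Fin d)))
    (hQne : Q.Nonempty) (hQclosed : IsClosed Q) (hQconv : Convex ℝ Q)
    (A B : EuclideanSpace ℝ (Fin d) → EuclideanSpace ℝ (Fin d))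
    (LA LB : ℝ)
    (hAmono : ∀ ζ ∈ Q, ∀ θ ∈ Q, 0 ≤ ⟪A ζ - A θ, ζ - θ⟫)
    (hBmono : ∀ ζ ∈ Q, ∀ θ ∈ Q, 0 ≤ ⟪B ζ - B θ, ζ - θ⟫)
    (hALip : ∀ ζ ∈ Q, ∀ θ ∈ Q, ‖A ζ - A θ‖ ≤ LA * ‖ζ - θ‖)
    (hBLip : ∀ ζ ∈ Q, ∀ θ ∈ Q, ‖B ζ - B θ‖ ≤ LB * ‖ζ - θ‖)
    (μ : ℝ) (hμ : 0 < μ)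
    (hstrong : ∀ ζ ∈ Q, ∀ θ ∈ Q, μ * ‖ζ - θ‖ ^ 2 ≤ ⟪(A ζ + B ζ) - (A θ + B θ), ζ - θ⟫)
    (ζstar : EuclideanSpace ℝ (Fin d)) (hζstarQ : ζstar ∈ Q)
    (hVI : ∀ ξ ∈ Q, 0 ≤ ⟪A ζstar + B ζstar, ξ - ζstar⟫)
    (η : ℝ) (hη : 0 < η) (hηle : η ≤ min (1 / (2 * LA)) (1 / (6 * μ)))
    (δ : ℝ) (hδ : δ ∈ Set.Ioc (0:ℝ) (1/4))
    (hδle : δ ≤ (64 / (η * μ) + 64 * η * LB ^ 2 / μ)⁻¹)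
    (ζ : EuclideanSpace ℝ (Fin d)) (hζ : ζ ∈ Q)
    (ν : EuclideanSpace ℝ (Fin d)) (hν : ν = ζ - η • A ζ)
    (θhat : EuclideanSpace ℝ (Fin d)) (hθhatQ : θhat ∈ Q)
    (hθhat : ∀ ξ ∈ Q, 0 ≤ ⟪η • B θhat + θhat - ν, ξ - θhat⟫)
    (θ : EuclideanSpace ℝ (Fin d)) (hθ : θ ∈ Q)
    (hθapprox : ‖θ - θhat‖ ^ 2 ≤ 4 * δ * ‖ζ - θ‖ ^ 2)
    (ω : EuclideanSpace ℝ (Fin d)) (hω : ω = θ + η • (A ζ - A θ))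
    (ζplus : EuclideanSpace ℝ (Fin d)) (hζplusQ : ζplus ∈ Q)
    (hproj : ∀ ξ ∈ Q, ‖ζplus - ω‖ ≤ ‖ξ - ω‖) :
    ‖ζplus - ζstar‖ ^ 2 ≤ (1 - η * μ) * ‖ζ - ζstar‖ ^ 2 := by
  obtain ⟨hδ0, -⟩ := hδ
  have hη1 := hηle.trans (min_le_left _ _)
  have hη2 := hηle.trans (min_le_right _ _)
  -- `LA ≤ 0` would make `1 / (2 * LA)` nonpositive.
  have hLA : 0 < LA := by
    have : 0 < 2 * LA := one_div_pos.1 (hη.trans_le hη1)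
    linarith
  have hηLA : η * LA ≤ 1 / 2 := by
    rw [le_div_iff₀ (by positivity)] at hη1
    linarith
  have hm6 : η * μ ≤ 1 / 6 := by
    rw [le_div_iff₀ (by positivity)] at hη2
    linarith
  have hm : 0 < η * μ := mul_pos hη hμ
  have hδm : δ ≤ η * μ / 64 := by
    refine hδle.trans ?_
    rw [← inv_div 64 (η * μ)]
    exact inv_anti₀ (by positivity) (le_add_of_nonneg_right (by positivity))
  obtain ⟨k, hk, hk2⟩ : ∃ k : ℝ, 0 ≤ k ∧ k ^ 2 = η * μ :=
    ⟨√(η * μ), Real.sqrt_nonneg _, Real.sq_sqrt hm.le⟩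
  have hk6 : k ^ 2 ≤ 1 / 6 := hk2 ▸ hm6
  have hstep : ∀ x ∈ Q, ∀ y ∈ Q, ‖η • (A x - A y)‖ ≤ ‖x - y‖ / 2 := fun x hx y hy => by
    rw [norm_smul, Real.norm_of_nonneg hη.le]
    nlinarith [mul_le_mul_of_nonneg_left (hALip x hx y hy) hη.le,
      mul_le_mul_of_nonneg_right hηLA (norm_nonneg (x - y))]
  have hf2 : ‖(θ - θhat) - η • (A θ - A θhat)‖ ^ 2 ≤ 5 / 4 * ‖θ - θhat‖ ^ 2 := by
    refine norm_sub_sq_le_of_inner_nonneg (hstep θ hθ θhat hθhatQ) ?_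
    rw [real_inner_smul_left]
    exact mul_nonneg hη.le (hAmono θ hθ θhat hθhatQ)
  have hf : ‖(θ - θhat) - η • (A θ - A θhat)‖ ≤ 0.312 * (k * ‖ζ - θhat‖) := by
    refine error_le (S₀ := ‖ζ - θ‖) hk hk6 (norm_nonneg _) (norm_nonneg (θ - θhat))
      (norm_nonneg _) ?_ ?_ hf2
    · rw [hk2]
      nlinarith [mul_le_mul_of_nonneg_right hδm (sq_nonneg ‖ζ - θ‖)]
    · rw [show ζ - θ = (ζ - θhat) - (θ - θhat) by abel]
      exact norm_sub_le _ _
  have hav : ⟪η • (A ζ - A θhat), θhat - ζstar⟫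
      ≤ ⟪ζ - θhat, θhat - ζstar⟫ - k ^ 2 * ‖θhat - ζstar‖ ^ 2 := by
    have h1 := hθhat ζstar hζstarQ
    have h2 := mul_le_mul_of_nonneg_left (hstrong θhat hθhatQ ζstar hζstarQ) hη.le
    have h3 := mul_nonneg hη.le (hVI θhat hθhatQ)
    rw [hν, ← neg_sub θhat ζstar, inner_neg_right] at h1
    rw [hk2]
    simp only [inner_add_left, inner_sub_left, real_inner_smul_left] at h1 h2 h3 ⊢
    linarith
  have hcore := contraction_core hk hk6 (hstep ζ hζ θhat hθhatQ) hav hf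
  have hω' : ω - ζstar = θhat - ζstar + η • (A ζ - A θhat)
      + ((θ - θhat) - η • (A θ - A θhat)) := by
    rw [hω]
    module
  rw [← hω', hk2, show θhat - ζstar + (ζ - θhat) = ζ - ζstar by abel] at hcore
  exact (pow_le_pow_left₀ (norm_nonneg _)
    (norm_nearest_sub_le hQconv hζplusQ hζstarQ hproj) 2).trans hcore
end

section
/- Let n ≥ 1, let C ∈ ℝ^{n×n} have nonnegative entries, and let x, y ∈ Δ_n be probability vectors. Then the optimal transport value min over π ∈ ℝ^{n×n} with π_{ij} ≥ 0, Σ_j π_{ij} = x_i for all i, and Σ_i π_{ij} = y_j for all j, of Σ_{i,j} C_{ij} π_{ij}, equals the penalized value min over p ∈ ℝ^{n×n} with p_{ij} ≥ 0 and Σ_{i,j} p_{ij} = 1 of Σ_{i,j} C_{ij} p_{ij} + 2 (max_{i,j} C_{ij}) ( Σ_i |Σ_j p_{ij} − x_i| + Σ_j |Σ_i p_{ij} − y_j| ). -/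
/-!
The penalty is exact because any probability matrix `p` can be rounded to a transport plan at a
cost controlled by its marginal violations. Let `r`, `c` be the row and column sums of `p`. Pick
factors `a i, b j ∈ [0, 1]` with `r i * a i = min (r i) (x i)` and `c j * b j = min (c j) (y j)`
(`exists_scaling`); then `q i j = p i j * (a i * b j)` lies below `p` and has marginals at most
`x` and `y`. Since `1 - a b ≤ (1 - a) + (1 - b)`, the missing mass `1 - ∑ q` is at most
`∑ |r - x| + ∑ |c - y|`. Filling the deficit with a rank-one matrix (`exists_completion`) gives a
transport plan, and each unit of added mass costs at most `M = max C`. Hence the cost of the plan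
is at most the penalized cost of `p`, even with `M` in place of `2 * M`. Conversely, transport
plans have zero penalty.
-/

/-- The factor by which a marginal `r` is scaled down to not exceed its target `x`. -/
lemma exists_scaling (r x : ℝ) (hr : 0 ≤ r) (hx : 0 ≤ x) :
    ∃ a : ℝ, 0 ≤ a ∧ a ≤ 1 ∧ r * a = min r x := by
  rcases hr.eq_or_lt with h | h
  · exact ⟨1, by norm_num, le_rfl, by subst h; simp [hx]⟩
  · refine ⟨min r x / r, by positivity, ?_, by field_simp⟩
    rw [div_le_one h]
    exact min_le_left _ _

/-- A nonnegative matrix whose marginals are dominated by `x` and `y` extends to a transport plan,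
the added mass `1 - ∑ q` costing at most `M` per unit. -/
lemma exists_completion {n : ℕ} (C q : Fin n → Fin n → ℝ) (M : ℝ) (hM : ∀ i j, C i j ≤ M)
    (x y : Fin n → ℝ) (hx : ∑ i, x i = 1) (hy : ∑ j, y j = 1)
    (hq : ∀ i j, 0 ≤ q i j) (hqx : ∀ i, ∑ j, q i j ≤ x i) (hqy : ∀ j, ∑ i, q i j ≤ y j) :
    ∃ π : Fin n → Fin n → ℝ, (∀ i j, 0 ≤ π i j) ∧ (∀ i, ∑ j, π i j = x i) ∧
      (∀ j, ∑ i, π i j = y j) ∧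
      ∑ i, ∑ j, C i j * π i j ≤ ∑ i, ∑ j, C i j * q i j + M * (1 - ∑ i, ∑ j, q i j) := by
  set m : ℝ := 1 - ∑ i, ∑ j, q i j with hm
  set u : Fin n → ℝ := fun i => x i - ∑ j, q i j with hu
  set v : Fin n → ℝ := fun j => y j - ∑ i, q i j with hv
  have hu0 : ∀ i, 0 ≤ u i := fun i => sub_nonneg.2 (hqx i)
  have hv0 : ∀ j, 0 ≤ v j := fun j => sub_nonneg.2 (hqy j)
  have hus : ∑ i, u i = m := by simp [hu, hm, Finset.sum_sub_distrib, hx]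
  have hvs : ∑ j, v j = m := by
    rw [hm, Finset.sum_comm]; simp [hv, Finset.sum_sub_distrib, hy]
  have hm0 : 0 ≤ m := hus ▸ Finset.sum_nonneg fun i _ => hu0 i
  -- When `m = 0` both deficits vanish, so the convention `t / 0 = 0` is harmless.
  have hrow : ∀ i, ∑ j, u i * v j / m = u i := by
    intro i
    rw [← Finset.sum_div, ← Finset.mul_sum, hvs]
    rcases eq_or_ne m 0 with h | h
    · have := (Finset.sum_eq_zero_iff_of_nonneg (fun i _ => hu0 i)).1 (hus.trans h) i
        (Finset.mem_univ i)
      simp [this]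
    · field_simp
  have hcol : ∀ j, ∑ i, u i * v j / m = v j := by
    intro j
    rw [← Finset.sum_div, ← Finset.sum_mul, hus]
    rcases eq_or_ne m 0 with h | h
    · have := (Finset.sum_eq_zero_iff_of_nonneg (fun i _ => hv0 i)).1 (hvs.trans h) j
        (Finset.mem_univ j)
      simp [this]
    · field_simp
  have hw0 : ∀ i j, 0 ≤ u i * v j / m := fun i j =>
    div_nonneg (mul_nonneg (hu0 i) (hv0 j)) hm0
  refine ⟨fun i j => q i j + u i * v j / m, fun i j => add_nonneg (hq i j) (hw0 i j), ?_, ?_, ?_⟩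
  · intro i
    rw [Finset.sum_add_distrib, hrow]; simp [hu]
  · intro j
    rw [Finset.sum_add_distrib, hcol]; simp [hv]
  · simp only [mul_add, Finset.sum_add_distrib]
    gcongr
    calc ∑ i, ∑ j, C i j * (u i * v j / m) ≤ ∑ i, ∑ j, M * (u i * v j / m) :=
          Finset.sum_le_sum fun i _ => Finset.sum_le_sum fun j _ =>
            mul_le_mul_of_nonneg_right (hM i j) (hw0 i j)
      _ = M * m := by simp only [← Finset.mul_sum, hrow, hus]

/-- Rounding: every probability matrix is dominated in penalized cost by some transport plan. -/
lemma exists_rounding {n : ℕ} (C p : Fin n → Fin n → ℝ) (M : ℝ) (hC : ∀ i j, 0 ≤ C i j)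
    (hM : ∀ i j, C i j ≤ M) (hM0 : 0 ≤ M) (x y : Fin n → ℝ)
    (hx0 : ∀ i, 0 ≤ x i) (hy0 : ∀ j, 0 ≤ y j) (hx : ∑ i, x i = 1) (hy : ∑ j, y j = 1)
    (hp : ∀ i j, 0 ≤ p i j) (hp1 : ∑ i, ∑ j, p i j = 1) :
    ∃ π : Fin n → Fin n → ℝ, (∀ i j, 0 ≤ π i j) ∧ (∀ i, ∑ j, π i j = x i) ∧
      (∀ j, ∑ i, π i j = y j) ∧
      ∑ i, ∑ j, C i j * π i j ≤ (∑ i, ∑ j, C i j * p i j) +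
          2 * M * ((∑ i, |(∑ j, p i j) - x i|) + (∑ j, |(∑ i, p i j) - y j|)) := by
  choose a ha0 ha1 ha using fun i =>
    exists_scaling (∑ j, p i j) (x i) (Finset.sum_nonneg fun j _ => hp i j) (hx0 i)
  choose b hb0 hb1 hb using fun j =>
    exists_scaling (∑ i, p i j) (y j) (Finset.sum_nonneg fun i _ => hp i j) (hy0 j)
  have hqa : ∀ i j, p i j * (a i * b j) ≤ p i j * a i := fun i j =>
    mul_le_mul_of_nonneg_left (mul_le_of_le_one_right (ha0 i) (hb1 j)) (hp i j)
  have hqb : ∀ i j, p i j * (a i * b j) ≤ p i j * b j := fun i j =>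
    mul_le_mul_of_nonneg_left (mul_le_of_le_one_left (hb0 j) (ha1 i)) (hp i j)
  obtain ⟨π, h0, h1, h2, h3⟩ := exists_completion C (fun i j => p i j * (a i * b j)) M hM x y hx hy
    (fun i j => mul_nonneg (hp i j) (mul_nonneg (ha0 i) (hb0 j)))
    (fun i => (Finset.sum_le_sum fun j _ => hqa i j).trans (by
      rw [← Finset.sum_mul, ha]; exact min_le_right _ _))
    (fun j => (Finset.sum_le_sum fun i _ => hqb i j).trans (by
      rw [← Finset.sum_mul, hb]; exact min_le_right _ _))
  refine ⟨π, h0, h1, h2, h3.trans ?_⟩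
  have hmin : ∀ s t : ℝ, s - min s t ≤ |s - t| := by
    intro s t
    rcases min_cases s t with ⟨h, _⟩ | ⟨h, _⟩ <;> rw [h]
    · simp
    · exact le_abs_self _
  have hcost : ∑ i, ∑ j, C i j * (p i j * (a i * b j)) ≤ ∑ i, ∑ j, C i j * p i j :=
    Finset.sum_le_sum fun i _ => Finset.sum_le_sum fun j _ =>
      mul_le_mul_of_nonneg_left ((hqa i j).trans (mul_le_of_le_one_right (hp i j) (ha1 i))) (hC i j)
  have hrow : ∑ i, ∑ j, p i j * (1 - a i) ≤ ∑ i, |(∑ j, p i j) - x i| :=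
    Finset.sum_le_sum fun i _ => by
      rw [← Finset.sum_mul, mul_sub, mul_one, ha]; exact hmin _ _
  have hcol : ∑ i, ∑ j, p i j * (1 - b j) ≤ ∑ j, |(∑ i, p i j) - y j| := by
    rw [Finset.sum_comm]
    exact Finset.sum_le_sum fun j _ => by
      rw [← Finset.sum_mul, mul_sub, mul_one, hb]; exact hmin _ _
  have hmass : 1 - ∑ i, ∑ j, p i j * (a i * b j) ≤
      ∑ i, ∑ j, p i j * (1 - a i) + ∑ i, ∑ j, p i j * (1 - b j) := by
    have e : 1 - ∑ i, ∑ j, p i j * (a i * b j) =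
        ∑ i, ∑ j, p i j - ∑ i, ∑ j, p i j * (a i * b j) := by rw [hp1]
    rw [e]
    simp only [← Finset.sum_sub_distrib, ← Finset.sum_add_distrib]
    refine Finset.sum_le_sum fun i _ => Finset.sum_le_sum fun j _ => ?_
    have := mul_nonneg (hp i j) (mul_nonneg (sub_nonneg.2 (ha1 i)) (sub_nonneg.2 (hb1 j)))
    linarith
  have hS : 0 ≤ (∑ i, |(∑ j, p i j) - x i|) + (∑ j, |(∑ i, p i j) - y j|) := by positivity
  have hMS := mul_le_mul_of_nonneg_left (hmass.trans (add_le_add hrow hcol)) hM0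
  have := mul_nonneg hM0 hS
  linarith

theorem stmt_19 (n : ℕ) (hn : 1 ≤ n) (C : Fin n → Fin n → ℝ)
    (hC : ∀ i j, 0 ≤ C i j)
    (x y : Fin n → ℝ)
    (hx : (∀ i, 0 ≤ x i) ∧ ∑ i, x i = 1)
    (hy : (∀ j, 0 ≤ y j) ∧ ∑ j, y j = 1) :
    sInf {v : ℝ | ∃ π : Fin n → Fin n → ℝ, (∀ i j, 0 ≤ π i j) ∧
        (∀ i, ∑ j, π i j = x i) ∧ (∀ j, ∑ i, π i j = y j) ∧
        v = ∑ i, ∑ j, C i j * π i j} =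
    sInf {v : ℝ | ∃ p : Fin n → Fin n → ℝ, (∀ i j, 0 ≤ p i j) ∧
        (∑ i, ∑ j, p i j = 1) ∧
        v = (∑ i, ∑ j, C i j * p i j) +
          2 * (⨆ i, ⨆ j, C i j) *
            ((∑ i, |(∑ j, p i j) - x i|) + (∑ j, |(∑ i, p i j) - y j|))} := by
  have hM : ∀ i j, C i j ≤ ⨆ i, ⨆ j, C i j := fun i j =>
    (le_ciSup (Set.finite_range (C i)).bddAbove j).trans
      (le_ciSup (f := fun i => ⨆ j, C i j) (Set.finite_range _).bddAbove i)
  have hM0 : 0 ≤ ⨆ i, ⨆ j, C i j := (hC ⟨0, hn⟩ ⟨0, hn⟩).trans (hM _ _)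
  generalize (⨆ i, ⨆ j, C i j) = M at hM hM0 ⊢
  obtain ⟨hx0, hx1⟩ := hx
  obtain ⟨hy0, hy1⟩ := hy
  have hsub : {v : ℝ | ∃ π : Fin n → Fin n → ℝ, (∀ i j, 0 ≤ π i j) ∧
        (∀ i, ∑ j, π i j = x i) ∧ (∀ j, ∑ i, π i j = y j) ∧
        v = ∑ i, ∑ j, C i j * π i j} ⊆
      {v : ℝ | ∃ p : Fin n → Fin n → ℝ, (∀ i j, 0 ≤ p i j) ∧
        (∑ i, ∑ j, p i j = 1) ∧
        v = (∑ i, ∑ j, C i j * p i j) +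
          2 * M * ((∑ i, |(∑ j, p i j) - x i|) + (∑ j, |(∑ i, p i j) - y j|))} := by
    rintro _ ⟨π, h0, h1, h2, rfl⟩
    exact ⟨π, h0, by simp [h1, hx1], by simp [h1, h2]⟩
  have hne : {v : ℝ | ∃ π : Fin n → Fin n → ℝ, (∀ i j, 0 ≤ π i j) ∧
        (∀ i, ∑ j, π i j = x i) ∧ (∀ j, ∑ i, π i j = y j) ∧
        v = ∑ i, ∑ j, C i j * π i j}.Nonempty :=
    -- the independent coupling
    ⟨_, fun i j => x i * y j, fun i j => mul_nonneg (hx0 i) (hy0 j),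
      fun i => by rw [← Finset.mul_sum, hy1, mul_one],
      fun j => by rw [← Finset.sum_mul, hx1, one_mul], rfl⟩
  apply le_antisymm
  · refine le_csInf (hne.mono hsub) ?_
    rintro _ ⟨p, hp, hp1, rfl⟩
    obtain ⟨π, h0, h1, h2, h3⟩ := exists_rounding C p M hC hM hM0 x y hx0 hy0 hx1 hy1 hp hp1
    refine le_trans (csInf_le ⟨0, ?_⟩ ⟨π, h0, h1, h2, rfl⟩) h3
    rintro _ ⟨π', h0', -, -, rfl⟩
    exact Finset.sum_nonneg fun i _ => Finset.sum_nonneg fun j _ => mul_nonneg (hC i j) (h0' i j)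
  · refine csInf_le_csInf ⟨0, ?_⟩ hne hsub
    rintro _ ⟨p, hp, -, rfl⟩
    have := Finset.sum_nonneg fun i (_ : i ∈ Finset.univ) =>
      Finset.sum_nonneg fun j (_ : j ∈ Finset.univ) => mul_nonneg (hC i j) (hp i j)
    positivity
end
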